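/- arXiv:math/0309439 — 3 statements merged into one kernel-verified Lean document; each statement's English description precedes it below -/
import Mathlib

section
/- Let (F,W) be a mixed Hodge structure on V. Then there exists a unique bigrading V = ⊕_{p,q∈ℤ} I^{p,q} of V by complex subspaces such that: (a) F^p = ⊕_{a≥p, b∈ℤ} I^{a,b} for every p; (b) W_k = ⊕_{a+b≤k} I^{a,b} for every k; (c) conj(I^{p,q}) ⊆ I^{q,p} + ⊕_{r<q, s<p} I^{r,s} for every p and q. -/
open Complex

noncomputable section

/-- A conjugation (real structure) on a complex vector space: an additive,
conjugate-semilinear involution of `V`. -/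
structure Conjugation (V : Type*) [AddCommGroup V] [Module ℂ V] where
  toFun : V →ₛₗ[starRingEnd ℂ] V
  invol : ∀ v, toFun (toFun v) = v

namespace Conjugation

variable {V : Type*} [AddCommGroup V] [Module ℂ V]

/-- The image of a complex subspace under the conjugation; it is again a
complex subspace. -/
def submap (c : Conjugation V) (S : Submodule ℂ V) : Submodule ℂ V where
  carrier := c.toFun '' (S : Set V)
  add_mem' := by
    rintro _ _ ⟨x, hx, rfl⟩ ⟨y, hy, rfl⟩
    exact ⟨x + y, S.add_mem hx hy, map_add _ _ _⟩
  zero_mem' := ⟨0, S.zero_mem, map_zero _⟩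
  smul_mem' := by
    rintro a _ ⟨x, hx, rfl⟩
    refine ⟨(starRingEnd ℂ) a • x, S.smul_mem _ hx, ?_⟩
    rw [map_smulₛₗ, starRingEnd_self_apply]

end Conjugation

/-- `(F, W)` is a mixed Hodge structure on `V` relative to the conjugation `c`:
`F` is a finite decreasing filtration by complex subspaces, `W` is a finite
increasing filtration by real (conjugation-stable) subspaces, and `F` induces
on each graded piece `Gr^W_k = W_k / W_{k-1}` a pure Hodge structure of
weight `k`. -/
structure IsMHS {V : Type*} [AddCommGroup V] [Module ℂ V] (c : Conjugation V)
    (F W : ℤ → Submodule ℂ V) : Prop where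
  antitone_F : Antitone F
  exists_F_top : ∃ p, F p = ⊤
  exists_F_bot : ∃ p, F p = ⊥
  monotone_W : Monotone W
  exists_W_bot : ∃ k, W k = ⊥
  exists_W_top : ∃ k, W k = ⊤
  real_W : ∀ k, ∀ v ∈ W k, c.toFun v ∈ W k
  graded_sup : ∀ k p : ℤ,
    ((F p ⊓ W k).map (W (k-1)).mkQ) ⊔ ((c.submap (F (k - p + 1)) ⊓ W k).map (W (k-1)).mkQ)
      = (W k).map (W (k-1)).mkQ
  graded_inf : ∀ k p : ℤ,
    ((F p ⊓ W k).map (W (k-1)).mkQ) ⊓ ((c.submap (F (k - p + 1)) ⊓ W k).map (W (k-1)).mkQ)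
      = ⊥

/-- `I` is a Deligne bigrading for the pair of filtrations `(F, W)`:
`V = ⊕_{p,q} I^{p,q}`, `F^p = ⊕_{a ≥ p} I^{a,b}`, `W_k = ⊕_{a+b ≤ k} I^{a,b}`,
and `conj (I^{p,q}) ⊆ I^{q,p} + ⊕_{r<q,s<p} I^{r,s}`. -/
structure IsDeligneBigrading {V : Type*} [AddCommGroup V] [Module ℂ V] (c : Conjugation V)
    (F W : ℤ → Submodule ℂ V) (I : ℤ → ℤ → Submodule ℂ V) : Prop where
  internal : DirectSum.IsInternal (fun pq : ℤ × ℤ => I pq.1 pq.2)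
  hF : ∀ p : ℤ, F p = ⨆ pq : ℤ × ℤ, ⨆ _ : p ≤ pq.1, I pq.1 pq.2
  hW : ∀ k : ℤ, W k = ⨆ pq : ℤ × ℤ, ⨆ _ : pq.1 + pq.2 ≤ k, I pq.1 pq.2
  conj_cond : ∀ p q : ℤ, ∀ v ∈ I p q,
    c.toFun v ∈ I q p ⊔ ⨆ pq : ℤ × ℤ, ⨆ _ : pq.1 < q ∧ pq.2 < p, I pq.1 pq.2

namespace DeligneAux

variable {V : Type*} [AddCommGroup V] [Module ℂ V] {c : Conjugation V}
  {F W : ℤ → Submodule ℂ V}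

theorem mem_submap {S : Submodule ℂ V} {v : V} : v ∈ c.submap S ↔ c.toFun v ∈ S := by
  constructor
  · rintro ⟨x, hx, rfl⟩
    rw [c.invol]; exact hx
  · intro hv
    exact ⟨c.toFun v, hv, c.invol v⟩

theorem submap_mono {S T : Submodule ℂ V} (hST : S ≤ T) : c.submap S ≤ c.submap T := by
  intro v hv
  rw [mem_submap] at *
  exact hST hv

/-- Elementwise form of `graded_sup`. -/
theorem gsup (h : IsMHS c F W) (k p q : ℤ) (hq : q = k - p + 1) {x : V} (hx : x ∈ W k) :
    ∃ f ∈ F p ⊓ W k, ∃ g ∈ c.submap (F q) ⊓ W k, ∃ w ∈ W (k - 1), x = f + g + w := by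
  subst hq
  have h1 : (W (k - 1)).mkQ x ∈ (W k).map (W (k - 1)).mkQ := Submodule.mem_map_of_mem hx
  rw [← h.graded_sup k p, Submodule.mem_sup] at h1
  obtain ⟨_, ⟨f, hf, rfl⟩, _, ⟨g, hg, rfl⟩, hfg⟩ := h1
  refine ⟨f, hf, g, hg, x - (f + g), ?_, by abel⟩
  rw [← map_add, eq_comm] at hfg
  exact (Submodule.Quotient.eq _).1 hfg

/-- Elementwise form of `graded_inf`. -/
theorem ginf (h : IsMHS c F W) (k p q : ℤ) (hq : q = k - p + 1) {f g : V}
    (hf : f ∈ F p ⊓ W k) (hg : g ∈ c.submap (F q) ⊓ W k) (hfg : f - g ∈ W (k - 1)) :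
    f ∈ W (k - 1) := by
  subst hq
  have e : (W (k - 1)).mkQ f = (W (k - 1)).mkQ g := (Submodule.Quotient.eq _).2 hfg
  have h1 : (W (k - 1)).mkQ f ∈ ((F p ⊓ W k).map (W (k-1)).mkQ) ⊓
      ((c.submap (F (k - p + 1)) ⊓ W k).map (W (k-1)).mkQ) :=
    ⟨Submodule.mem_map_of_mem hf, e ▸ Submodule.mem_map_of_mem hg⟩
  rw [h.graded_inf k p, Submodule.mem_bot] at h1
  exact (Submodule.Quotient.mk_eq_zero _).1 h1

/-- The auxiliary space `G^q ∩ W_{p+q} + Σ_{m ≤ p+q-2} G^{m-p+1} ∩ W_m`. -/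
def U (c : Conjugation V) (F W : ℤ → Submodule ℂ V) (p q : ℤ) : Submodule ℂ V :=
  (c.submap (F q) ⊓ W (p + q)) ⊔
    ⨆ m : ℤ, ⨆ _ : m ≤ p + q - 2, c.submap (F (m - p + 1)) ⊓ W m

/-- Deligne's bigrading. -/
def I (c : Conjugation V) (F W : ℤ → Submodule ℂ V) (p q : ℤ) : Submodule ℂ V :=
  (F p ⊓ W (p + q)) ⊓ U c F W p q

theorem le_U_left (p q : ℤ) : c.submap (F q) ⊓ W (p + q) ≤ U c F W p q := le_sup_left

theorem le_U_right (h : IsMHS c F W) {p q r m : ℤ} (hm : m ≤ p + q - 2) (hr : m - p + 1 ≤ r) :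
    c.submap (F r) ⊓ W m ≤ U c F W p q :=
  le_trans (inf_le_inf_right _ (submap_mono (h.antitone_F hr)))
    (le_trans (le_iSup₂_of_le m hm le_rfl) le_sup_right)

/-- `r = q - a`, weight at most `p + q - a - 1`. -/
theorem le_U_lt (h : IsMHS c F W) {p q r s : ℤ} (hr : r < q) (hs : s < p) :
    c.submap (F r) ⊓ W (r + s) ≤ U c F W p q :=
  le_U_right h (by omega) (by omega)

theorem W_le (h : IsMHS c F W) (p q : ℤ) :
    ∀ m ≤ p + q - 1, W m ≤ (F p ⊓ W m) ⊔ U c F W p q := by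
  obtain ⟨K, hK⟩ := h.exists_W_bot
  have key : ∀ n : ℕ, ∀ m ≤ p + q - 1, m ≤ K + n → W m ≤ (F p ⊓ W m) ⊔ U c F W p q := by
    intro n
    induction n with
    | zero =>
      intro m _ hm
      have : W m ≤ W K := h.monotone_W (by simpa using hm)
      rw [hK] at this
      exact this.trans bot_le
    | succ n ih =>
      intro m hm hmn x hx
      obtain ⟨f, hf, g, hg, w, hw, rfl⟩ := gsup h m p (m - p + 1) rfl hx
      have hgU : g ∈ U c F W p q := by
        rcases eq_or_lt_of_le hm with e | hlt
        · have e2 : m - p + 1 = q := by omega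
          rw [e2] at hg
          exact le_U_left p q ⟨hg.1, h.monotone_W (by omega) hg.2⟩
        · exact le_U_right h (by omega) le_rfl hg
      have hw' := ih (m - 1) (by omega) (by push_cast at hmn; omega) hw
      have hle : (F p ⊓ W (m - 1)) ⊔ U c F W p q ≤ (F p ⊓ W m) ⊔ U c F W p q :=
        sup_le_sup_right (inf_le_inf_left _ (h.monotone_W (by omega))) _
      exact add_mem (add_mem (le_sup_left (a := F p ⊓ W m) hf)
        (le_sup_right (a := F p ⊓ W m) hgU)) (hle hw')
  intro m hm
  exact key (m - K).toNat m hm (by omega)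

/-- Lifting from the graded piece. -/
theorem lift (h : IsMHS c F W) (p q : ℤ) {x g w : V} (hx : x ∈ F p ⊓ W (p + q))
    (hg : g ∈ c.submap (F q) ⊓ W (p + q)) (hw : w ∈ W (p + q - 1)) (e : x = g + w) :
    x ∈ I c F W p q ⊔ (F p ⊓ W (p + q - 1)) := by
  obtain ⟨f, hf, u, hu, rfl⟩ := Submodule.mem_sup.1 (W_le h p q _ le_rfl hw)
  refine Submodule.mem_sup.2 ⟨x - f, ⟨⟨sub_mem hx.1 hf.1, sub_mem hx.2 ?_⟩, ?_⟩, f, hf, by abel⟩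
  · exact h.monotone_W (by omega) hf.2
  · have : x - f = g + u := by rw [e]; abel
    rw [this]
    exact add_mem (le_U_left p q hg) hu

theorem step (h : IsMHS c F W) (p q : ℤ) :
    F p ⊓ W (p + q) ≤ (F (p + 1) ⊓ W (p + q)) ⊔ (I c F W p q ⊔ (F p ⊓ W (p + q - 1))) := by
  intro x hx
  obtain ⟨f, hf, g, hg, w, hw, e⟩ := gsup h (p + q) (p + 1) q (by omega) hx.2
  refine Submodule.mem_sup.2 ⟨f, hf, x - f, ?_, by abel⟩
  refine lift h p q ⟨sub_mem hx.1 (h.antitone_F (by omega) hf.1), sub_mem hx.2 hf.2⟩ hg hw ?_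
  rw [e]; abel

theorem FW_le (h : IsMHS c F W) (p k : ℤ) :
    F p ⊓ W k ≤ ⨆ pq : ℤ × ℤ, ⨆ _ : p ≤ pq.1 ∧ pq.1 + pq.2 ≤ k, I c F W pq.1 pq.2 := by
  obtain ⟨K, hK⟩ := h.exists_W_bot
  obtain ⟨P, hP⟩ := h.exists_F_bot
  have key : ∀ n : ℕ, ∀ p k : ℤ, P - p + (k - K) ≤ n →
      F p ⊓ W k ≤ ⨆ pq : ℤ × ℤ, ⨆ _ : p ≤ pq.1 ∧ pq.1 + pq.2 ≤ k, I c F W pq.1 pq.2 := by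
    intro n
    induction n with
    | zero =>
      intro p k hn
      rcases le_or_gt P p with hp | hp
      · have : F p ≤ F P := h.antitone_F hp
        rw [hP] at this
        exact inf_le_left.trans (this.trans bot_le)
      · have : W k ≤ W K := h.monotone_W (by push_cast at hn; omega)
        rw [hK] at this
        exact inf_le_right.trans (this.trans bot_le)
    | succ n ih =>
      intro p k hn
      push_cast at hn
      obtain ⟨q, rfl⟩ : ∃ q, k = p + q := ⟨k - p, by ring⟩
      refine (step h p q).trans (sup_le ?_ (sup_le ?_ ?_))
      · refine (ih (p + 1) (p + q) (by omega)).trans (iSup₂_le fun i hi => ?_)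
        exact le_iSup₂_of_le i ⟨by omega, hi.2⟩ le_rfl
      · exact le_iSup₂_of_le (p, q) ⟨le_rfl, le_rfl⟩ le_rfl
      · refine (ih p (p + q - 1) (by omega)).trans (iSup₂_le fun i hi => ?_)
        exact le_iSup₂_of_le i ⟨hi.1, by omega⟩ le_rfl
  exact key (P - p + (k - K)).toNat p k (by omega)

theorem U_le (h : IsMHS c F W) (p q m : ℤ) (hm : m ≤ p + q - 1) :
    U c F W p q ≤ c.submap (F (m - p + 1)) ⊔ W (m - 1) := by
  refine sup_le ?_ (iSup₂_le fun j hj => ?_)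
  · exact inf_le_left.trans ((submap_mono (h.antitone_F (by omega))).trans le_sup_left)
  · rcases lt_or_ge j m with hjm | hjm
    · exact inf_le_right.trans ((h.monotone_W (by omega)).trans le_sup_right)
    · exact inf_le_left.trans ((submap_mono (h.antitone_F (by omega))).trans le_sup_left)

theorem I_inf_W (h : IsMHS c F W) (p q : ℤ) {x : V} (hx : x ∈ I c F W p q)
    (hw : x ∈ W (p + q - 1)) : x = 0 := by
  have key : ∀ n : ℕ, x ∈ W (p + q - 1 - n) := by
    intro n
    induction n with
    | zero => simpa using hw
    | succ n ih =>
      obtain ⟨g, hg, w, hw', e⟩ := Submodule.mem_sup.1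
        (U_le h p q (p + q - 1 - n) (by omega) hx.2)
      have := ginf h (p + q - 1 - n) p _ rfl (f := x) (g := g) ⟨hx.1.1, ih⟩ ⟨hg, ?_⟩ ?_
      · convert this using 2
        push_cast; ring
      · have : g = x - w := by rw [← e]; abel
        rw [this]
        exact sub_mem ih (h.monotone_W (by omega) hw')
      · have : x - g = w := by rw [← e]; abel
        rw [this]; exact hw'
  obtain ⟨K, hK⟩ := h.exists_W_bot
  have h1 := h.monotone_W (show p + q - 1 - ((p + q - 1 - K).toNat : ℤ) ≤ K by omega)
    (key (p + q - 1 - K).toNat)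
  rwa [hK, Submodule.mem_bot] at h1

theorem I_inf (h : IsMHS c F W) (p q : ℤ) {x : V} (hx : x ∈ I c F W p q)
    (hw : x ∈ (F (p + 1) ⊓ W (p + q)) ⊔ W (p + q - 1)) : x = 0 := by
  apply I_inf_W h p q hx
  obtain ⟨f, hf, w, hw, e⟩ := Submodule.mem_sup.1 hw
  have h2 : U c F W p q ≤ (c.submap (F q) ⊓ W (p + q)) ⊔ W (p + q - 1) :=
    sup_le_sup_left (iSup₂_le fun j hj => inf_le_right.trans (h.monotone_W (by omega))) _
  obtain ⟨g, hg, w', hw', e'⟩ := Submodule.mem_sup.1 (h2 hx.2)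
  have h3 := ginf h (p + q) (p + 1) q (by omega) hf hg (by
    have : f - g = w' - w := by
      rw [sub_eq_sub_iff_add_eq_add, e, ← e']; abel
    rw [this]; exact sub_mem hw' hw)
  rw [← e]
  exact add_mem h3 hw

theorem indep (h : IsMHS c F W) : iSupIndep (fun pq : ℤ × ℤ => I c F W pq.1 pq.2) := by
  classical
  rw [iSupIndep_iff_finsetSum_eq_zero_imp_eq_zero]
  intro s v hv hsum
  by_contra hne
  push Not at hne
  obtain ⟨i₀, hi₀, hi₀'⟩ := hne
  obtain ⟨i, hi, hmax⟩ := Finset.exists_max_image (s.filter fun i => v i ≠ 0)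
    (fun i : ℤ × ℤ => toLex (i.1 + i.2, -i.1)) ⟨i₀, by simp [hi₀, hi₀']⟩
  rw [Finset.mem_filter] at hi
  apply hi.2
  apply I_inf h i.1 i.2 (hv i hi.1)
  rw [← Finset.add_sum_erase s v hi.1] at hsum
  rw [eq_neg_of_add_eq_zero_left hsum]
  refine neg_mem (sum_mem fun j hj => ?_)
  rw [Finset.mem_erase] at hj
  by_cases hj0 : v j = 0
  · rw [hj0]; exact zero_mem _
  have hjI := hv j hj.2
  have hle := hmax j (Finset.mem_filter.2 ⟨hj.2, hj0⟩)
  rw [Prod.Lex.toLex_le_toLex] at hle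
  rcases hle with hlt | ⟨heq, hle⟩
  · exact le_sup_right (a := F (i.1 + 1) ⊓ W (i.1 + i.2))
      (h.monotone_W (by simp only at hlt; omega) hjI.1.2)
  · simp only at heq hle
    have hne : i.1 ≠ j.1 := fun e => hj.1 (Prod.ext e.symm (by omega))
    exact le_sup_left (a := F (i.1 + 1) ⊓ W (i.1 + i.2))
      ⟨h.antitone_F (by omega) hjI.1.1, heq ▸ hjI.1.2⟩

theorem I_top (h : IsMHS c F W) : ⨆ pq : ℤ × ℤ, I c F W pq.1 pq.2 = ⊤ := by
  obtain ⟨P, hP⟩ := h.exists_F_top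
  obtain ⟨K, hK⟩ := h.exists_W_top
  rw [eq_top_iff]
  have := FW_le h P K
  rw [hP, hK, top_inf_eq] at this
  exact this.trans (iSup_mono fun i => iSup_le fun _ => le_rfl)

theorem I_conj (h : IsMHS c F W) (p q : ℤ) (v : V) (hv : v ∈ I c F W p q) :
    c.toFun v ∈ I c F W q p ⊔
      ⨆ pq : ℤ × ℤ, ⨆ _ : pq.1 < q ∧ pq.2 < p, I c F W pq.1 pq.2 := by
  set J : Submodule ℂ V := ⨆ pq : ℤ × ℤ, ⨆ _ : pq.1 < q ∧ pq.2 < p, I c F W pq.1 pq.2 with hJ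
  have h1 : U c F W p q ≤ c.submap ((F q ⊓ W (p + q)) ⊔ J) := by
    refine sup_le ?_ (iSup₂_le fun m hm => ?_)
    · intro x hx
      exact mem_submap.2 (le_sup_left (a := F q ⊓ W (p + q))
        ⟨mem_submap.1 hx.1, h.real_W _ _ hx.2⟩)
    · intro x hx
      refine mem_submap.2 (SetLike.le_def.1 ((FW_le h _ _).trans (iSup₂_le fun i hi => ?_))
        (⟨mem_submap.1 hx.1, h.real_W _ _ hx.2⟩ : c.toFun x ∈ F (m - p + 1) ⊓ W m))
      rcases lt_or_ge i.1 q with hiq | hiq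
      · exact le_trans (le_iSup₂_of_le i ⟨hiq, by omega⟩ le_rfl) le_sup_right
      · exact fun y hy => le_sup_left (a := F q ⊓ W (p + q))
          ⟨h.antitone_F hiq hy.1.1, h.monotone_W (by omega) hy.1.2⟩
  have h2 : J ≤ U c F W q p := by
    refine iSup₂_le fun i hi => inf_le_right.trans (sup_le ?_ (iSup₂_le fun m hm => ?_))
    · exact le_U_right h (by omega) (by omega)
    · exact le_U_right h (by omega) (by omega)
  obtain ⟨A, hA, B, hB, e⟩ := Submodule.mem_sup.1 (mem_submap.1 (h1 hv.2))
  refine Submodule.mem_sup.2 ⟨A, ⟨⟨hA.1, by rw [add_comm]; exact hA.2⟩, ?_⟩, B, hB, e⟩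
  have : A = c.toFun v - B := by rw [← e]; abel
  rw [this]
  refine sub_mem (le_U_left q p ⟨?_, ?_⟩) (h2 hB)
  · exact mem_submap.2 (by rw [c.invol]; exact hv.1.1)
  · rw [add_comm]; exact h.real_W _ _ hv.1.2

theorem isDeligne (h : IsMHS c F W) : IsDeligneBigrading c F W (I c F W) where
  internal := DirectSum.isInternal_submodule_of_iSupIndep_of_iSup_eq_top (indep h) (I_top h)
  hF p := by
    apply le_antisymm
    · obtain ⟨K, hK⟩ := h.exists_W_top
      have := FW_le h p K
      rw [hK, inf_top_eq] at this
      exact this.trans (iSup₂_le fun i hi => le_iSup₂_of_le i hi.1 le_rfl)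
    · exact iSup₂_le fun i hi y hy => h.antitone_F hi hy.1.1
  hW k := by
    apply le_antisymm
    · obtain ⟨P, hP⟩ := h.exists_F_top
      have := FW_le h P k
      rw [hP, top_inf_eq] at this
      exact this.trans (iSup₂_le fun i hi => le_iSup₂_of_le i hi.2 le_rfl)
    · exact iSup₂_le fun i hi y hy => h.monotone_W hi hy.1.2
  conj_cond := I_conj h

theorem le_I (h : IsMHS c F W) {J : ℤ → ℤ → Submodule ℂ V} (hJ : IsDeligneBigrading c F W J)
    (p q : ℤ) : J p q ≤ I c F W p q := by
  have hF : ∀ a b, J a b ≤ F a := fun a b => by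
    rw [hJ.hF a]; exact le_iSup₂_of_le (a, b) le_rfl le_rfl
  have hW : ∀ a b, J a b ≤ W (a + b) := fun a b => by
    rw [hJ.hW]; exact le_iSup₂_of_le (a, b) le_rfl le_rfl
  intro x hx
  refine ⟨⟨hF _ _ hx, hW _ _ hx⟩, ?_⟩
  have h1 : J q p ⊔ (⨆ pq : ℤ × ℤ, ⨆ _ : pq.1 < q ∧ pq.2 < p, J pq.1 pq.2)
      ≤ c.submap (U c F W p q) := by
    have aux : ∀ a b, ∀ y ∈ J a b, c.toFun y ∈ c.submap (F a) ⊓ W (a + b) := fun a b y hy =>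
      ⟨mem_submap.2 (by rw [c.invol]; exact hF _ _ hy), h.real_W _ _ (hW _ _ hy)⟩
    refine sup_le ?_ (iSup₂_le fun i hi => ?_)
    · intro y hy
      rw [mem_submap]
      apply le_U_left
      rw [add_comm p q]
      exact aux _ _ y hy
    · intro y hy
      rw [mem_submap]
      exact le_U_lt h hi.1 hi.2 (aux _ _ y hy)
  have h2 := mem_submap.1 (h1 (hJ.conj_cond p q x hx))
  rwa [c.invol] at h2

theorem uniq (h : IsMHS c F W) {J : ℤ → ℤ → Submodule ℂ V} (hJ : IsDeligneBigrading c F W J) :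
    J = I c F W := by
  funext p q
  refine le_antisymm (le_I h hJ p q) ?_
  have htop : (⨆ pq : ℤ × ℤ, J pq.1 pq.2) = ⊤ := hJ.internal.submodule_iSup_eq_top
  have h1 : (⊤ : Submodule ℂ V) ≤ J p q ⊔ ⨆ j : ℤ × ℤ, ⨆ _ : j ≠ (p, q), I c F W j.1 j.2 := by
    rw [← htop]
    refine iSup_le fun i => ?_
    by_cases hi : i = (p, q)
    · subst hi; exact le_sup_left
    · exact (le_I h hJ _ _).trans (le_trans (le_iSup₂_of_le i hi le_rfl) le_sup_right)
  intro x hx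
  obtain ⟨y, hy, z, hz, e⟩ := Submodule.mem_sup.1 (h1 (Submodule.mem_top (x := x)))
  have hz' : z ∈ I c F W p q := by
    have : z = x - y := by rw [← e]; abel
    rw [this]; exact sub_mem hx (le_I h hJ p q hy)
  have h0 : z = 0 := Submodule.disjoint_def.1 (indep h (p, q)) z hz' hz
  rw [← e, h0, add_zero]
  exact hy

end DeligneAux

/-- **Deligne's theorem.** Every mixed Hodge structure `(F,W)` on `V` admits a
unique bigrading `V = ⊕_{p,q} I^{p,q}` with `F^p = ⊕_{a ≥ p} I^{a,b}`,
`W_k = ⊕_{a+b ≤ k} I^{a,b}` and `conj (I^{p,q}) ⊆ I^{q,p} + ⊕_{r<q,s<p} I^{r,s}`. -/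
theorem deligne_bigrading_existsUnique
    {V : Type*} [AddCommGroup V] [Module ℂ V] [FiniteDimensional ℂ V]
    (c : Conjugation V) (F W : ℤ → Submodule ℂ V) (h : IsMHS c F W) :
    ∃! I : ℤ → ℤ → Submodule ℂ V, IsDeligneBigrading c F W I :=
  ⟨DeligneAux.I c F W, DeligneAux.isDeligne h, fun _ hJ => DeligneAux.uniq h hJ⟩
end
end

section
/- Let (F,W) be a mixed Hodge structure on V. Then there exists a unique real element δ ∈ Λ_{(F,W)} (i.e., δ commutes with conjugation) such that (exp(−iδ)·F, W) is a mixed Hodge structure that is split over ℝ. -/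
open Complex

noncomputable section

/-- The bidegree-`(r,s)` part `gl^{r,s}` of `End(V)` induced by a bigrading `I` of `V`. -/
def glrs {V : Type*} [AddCommGroup V] [Module ℂ V]
    (I : ℤ → ℤ → Submodule ℂ V) (r s : ℤ) : Submodule ℂ (Module.End ℂ V) where
  carrier := {α | ∀ p q : ℤ, ∀ v ∈ I p q, α v ∈ I (p + r) (q + s)}
  add_mem' := by
    intro α β hα hβ p q v hv
    simpa [LinearMap.add_apply] using
      Submodule.add_mem _ (hα p q v hv) (hβ p q v hv)
  zero_mem' := by
    intro p q v hv
    simp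
  smul_mem' := by
    intro t α hα p q v hv
    simpa [LinearMap.smul_apply] using Submodule.smul_mem _ t (hα p q v hv)

/-- `Λ_{(F,W)} = ⊕_{r<0, s<0} gl^{r,s}`, computed from the bigrading `I` of `(F,W)`. -/
def Lambda {V : Type*} [AddCommGroup V] [Module ℂ V]
    (I : ℤ → ℤ → Submodule ℂ V) : Submodule ℂ (Module.End ℂ V) :=
  ⨆ rs : ℤ × ℤ, ⨆ _ : rs.1 < 0 ∧ rs.2 < 0, glrs I rs.1 rs.2

/-- The exponential of an endomorphism of a finite-dimensional space, given as the
finite sum `Σ_{n ≤ dim V} α^n / n!`; it agrees with the analytic exponential whenever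
`α` is nilpotent (as is every element of `Λ_{(F,W)}`). -/
def expNil {V : Type*} [AddCommGroup V] [Module ℂ V] [FiniteDimensional ℂ V]
    (α : Module.End ℂ V) : Module.End ℂ V :=
  ∑ n ∈ Finset.range (Module.finrank ℂ V + 1), ((n.factorial : ℂ))⁻¹ • α ^ n

section ExpLemmas

set_option linter.unusedSectionVars false

variable {V : Type*} [AddCommGroup V] [Module ℂ V] [FiniteDimensional ℂ V]

theorem pow_finrank_succ_of_nil {a : Module.End ℂ V} (ha : IsNilpotent a) :
    a ^ (Module.finrank ℂ V + 1) = 0 := by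
  have h1 := LinearMap.aeval_self_charpoly a
  rw [LinearMap.charpoly_eq_X_pow_iff _ |>.2 ?_] at h1
  · rw [pow_succ]
    simp only [map_pow, Polynomial.aeval_X] at h1
    rw [h1, zero_mul]
  · intro m
    obtain ⟨n, hn⟩ := ha
    exact ⟨n, by rw [hn]; rfl⟩

theorem expNil_eq_exp [Module ℚ (Module.End ℂ V)] {a : Module.End ℂ V} (ha : IsNilpotent a) :
    expNil a = IsNilpotent.exp a := by
  rw [IsNilpotent.exp_eq_sum (pow_finrank_succ_of_nil ha), expNil]
  refine Finset.sum_congr rfl fun n _ => ?_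
  have := map_rat_smul (LinearMap.toSpanSingleton ℂ (Module.End ℂ V) (a ^ n)).toAddMonoidHom
    ((n.factorial : ℚ)⁻¹) (1 : ℂ)
  simp only [LinearMap.toAddMonoidHom_coe, LinearMap.toSpanSingleton_apply, one_smul] at this
  rw [← this, Rat.smul_def, mul_one]
  push_cast
  rfl

theorem expNil_add {a b : Module.End ℂ V} (hab : Commute a b) (ha : IsNilpotent a)
    (hb : IsNilpotent b) : expNil (a + b) = expNil a * expNil b := by
  let _ : Module ℚ (Module.End ℂ V) := Module.compHom _ (algebraMap ℚ ℂ)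
  rw [expNil_eq_exp ha, expNil_eq_exp hb, expNil_eq_exp (hab.isNilpotent_add ha hb),
    IsNilpotent.exp_add_of_commute hab ha hb]

theorem expNil_zero : expNil (0 : Module.End ℂ V) = 1 := by
  let _ : Module ℚ (Module.End ℂ V) := Module.compHom _ (algebraMap ℚ ℂ)
  rw [expNil_eq_exp IsNilpotent.zero, IsNilpotent.exp_zero]

theorem expNil_mul_neg {a : Module.End ℂ V} (ha : IsNilpotent a) :
    expNil a * expNil (-a) = 1 := by
  rw [← expNil_add (Commute.neg_right (Commute.refl a)) ha ha.neg, add_neg_cancel, expNil_zero]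

theorem expNil_neg_mul {a : Module.End ℂ V} (ha : IsNilpotent a) :
    expNil (-a) * expNil a = 1 := by
  rw [← expNil_add (Commute.neg_left (Commute.refl a)) ha.neg ha, neg_add_cancel, expNil_zero]

theorem map_expNil (f : Module.End ℂ V →+* Module.End ℂ V) {a : Module.End ℂ V}
    (ha : IsNilpotent a) : f (expNil a) = expNil (f a) := by
  let _ : Module ℚ (Module.End ℂ V) := Module.compHom _ (algebraMap ℚ ℂ)
  rw [expNil_eq_exp ha, expNil_eq_exp (ha.map f), IsNilpotent.map_exp ha]

variable {L : Submodule ℂ (Module.End ℂ V)}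

theorem L_pow_mem (hL : L * L ≤ L) {X : Module.End ℂ V} (hX : X ∈ L) (n : ℕ) : X ^ (n+1) ∈ L := by
  induction n with
  | zero => simpa
  | succ n ih => rw [pow_succ]; exact hL (Submodule.mul_mem_mul ih hX)

theorem L_nil {N : ℕ} (hN : L ^ N = ⊥) {X : Module.End ℂ V} (hX : X ∈ L) : IsNilpotent X := by
  refine ⟨N, ?_⟩
  have := Submodule.pow_mem_pow L hX N
  rwa [hN, Submodule.mem_bot] at this

theorem L_pow_anti (hL : L * L ≤ L) (m : ℕ) : L ^ (m + 2) ≤ L ^ (m + 1) := by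
  rw [Submodule.pow_succ, Submodule.pow_succ]
  rw [mul_assoc]
  exact mul_le_mul' le_rfl hL

theorem expNil_sub_one_mem (hL : L * L ≤ L) {X : Module.End ℂ V} (hX : X ∈ L) :
    expNil X - 1 ∈ L := by
  rw [expNil, Finset.sum_range_succ']
  simp only [pow_zero, Nat.factorial_zero, Nat.cast_one, inv_one, one_smul, add_sub_cancel_right]
  exact Submodule.sum_mem _ fun n _ => Submodule.smul_mem _ _ (L_pow_mem hL hX n)

theorem pow_sub_mem (hL : L * L ≤ L) {X Y : Module.End ℂ V} (hX : X ∈ L) (hY : Y ∈ L) {m : ℕ}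
    (hXY : X - Y ∈ L ^ (m + 1)) (n : ℕ) : X ^ (n + 1) - Y ^ (n + 1) ∈ L ^ (m + 1) ∧
      X ^ (n + 2) - Y ^ (n + 2) ∈ L ^ (m + 2) := by
  have key : ∀ n, X ^ (n + 1) - Y ^ (n + 1) ∈ L ^ (m + 1) →
      X ^ (n + 2) - Y ^ (n + 2) ∈ L ^ (m + 2) := by
    intro n h
    have : X ^ (n + 2) - Y ^ (n + 2) = X ^ (n+1) * (X - Y) + (X ^ (n+1) - Y ^ (n+1)) * Y := by
      rw [pow_succ X (n+1), pow_succ Y (n+1)]; noncomm_ring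
    rw [this]
    refine Submodule.add_mem _ ?_ ?_
    · rw [Submodule.pow_succ' _ (Nat.succ_ne_zero m)]
      exact Submodule.mul_mem_mul (L_pow_mem hL hX n) hXY
    · rw [Submodule.pow_succ (n := m + 1)]
      exact Submodule.mul_mem_mul h hY
  induction n with
  | zero => 
    have h : X ^ (0 + 1) - Y ^ (0 + 1) ∈ L ^ (m + 1) := by simpa using hXY
    exact ⟨h, key 0 h⟩
  | succ n ih => 
    have h := L_pow_anti hL m ih.2
    exact ⟨h, key _ h⟩

theorem expNil_sub_mem (hL : L * L ≤ L) {X Y : Module.End ℂ V} (hX : X ∈ L) (hY : Y ∈ L) {m : ℕ}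
    (hXY : X - Y ∈ L ^ (m + 1)) : expNil X - expNil Y - (X - Y) ∈ L ^ (m + 2) := by
  rcases Nat.eq_zero_or_pos (Module.finrank ℂ V) with h0 | hpos
  · have : Subsingleton V := Module.finrank_zero_iff.1 h0
    rw [Subsingleton.elim (expNil X - expNil Y - (X - Y)) 0]
    exact Submodule.zero_mem _
  · obtain ⟨e, he⟩ := Nat.exists_eq_succ_of_ne_zero hpos.ne'
    have : expNil X - expNil Y - (X - Y) = ∑ n ∈ Finset.range e,
        (((n+2).factorial : ℂ))⁻¹ • (X ^ (n+2) - Y ^ (n+2)) := by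
      rw [expNil, expNil, he]
      simp only [Nat.succ_eq_add_one, Finset.sum_range_succ', smul_sub, Finset.sum_sub_distrib]
      simp
      abel
    rw [this]
    exact Submodule.sum_mem _ fun n _ => Submodule.smul_mem _ _ (pow_sub_mem hL hX hY hXY n).2

theorem expNil_inj (hL : L * L ≤ L) {N : ℕ} (hN : L ^ N = ⊥) {X Y : Module.End ℂ V}
    (hX : X ∈ L) (hY : Y ∈ L) (h : expNil X = expNil Y) : X = Y := by
  have key : ∀ m, X - Y ∈ L ^ (m + 1) := by
    intro m
    induction m with
    | zero => simpa using Submodule.sub_mem _ hX hY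
    | succ m ih =>
      have := expNil_sub_mem hL hX hY ih
      rw [h, sub_self, zero_sub] at this
      exact (Submodule.neg_mem_iff _).1 this
  have := key N
  rw [Submodule.pow_succ, hN, Submodule.bot_mul, Submodule.mem_bot] at this
  exact sub_eq_zero.1 this

theorem expNil_surj (hL : L * L ≤ L) {N : ℕ} (hN : L ^ N = ⊥) {g : Module.End ℂ V}
    (hg : g - 1 ∈ L) : ∃ X ∈ L, expNil X = g := by
  have key : ∀ m, ∃ X ∈ L, g - expNil X ∈ L ^ (m + 1) := by
    intro m
    induction m with
    | zero => exact ⟨0, Submodule.zero_mem _, by simpa [expNil_zero] using hg⟩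
    | succ m ih =>
      obtain ⟨X, hX, h⟩ := ih
      have hle : L ^ (m + 1) ≤ L := by
        clear h
        induction m with
        | zero => simp
        | succ m ih => exact (L_pow_anti hL m).trans ih
      have hX' : X + (g - expNil X) ∈ L := Submodule.add_mem _ hX (hle h)
      refine ⟨_, hX', ?_⟩
      have := expNil_sub_mem hL hX' hX (m := m) (by simpa using h)
      rw [← Submodule.neg_mem_iff]
      convert this using 1
      abel
  obtain ⟨X, hX, h⟩ := key N
  rw [Submodule.pow_succ, hN, Submodule.bot_mul, Submodule.mem_bot] at h
  exact ⟨X, hX, (sub_eq_zero.1 h).symm⟩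

end ExpLemmas

section Bigrading

set_option linter.unusedSectionVars false

variable {V : Type*} [AddCommGroup V] [Module ℂ V] [FiniteDimensional ℂ V]

/-- Component projections of a bigrading. -/
structure IsProj (I : ℤ → ℤ → Submodule ℂ V) (S : Finset (ℤ × ℤ))
    (π : ℤ × ℤ → Module.End ℂ V) : Prop where
  mem : ∀ x v, π x v ∈ I x.1 x.2
  same : ∀ x : ℤ × ℤ, ∀ v ∈ I x.1 x.2, π x v = v
  ne : ∀ x y : ℤ × ℤ, x ≠ y → ∀ v ∈ I x.1 x.2, π y v = 0
  sum : ∀ v, ∑ x ∈ S, π x v = v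

theorem exists_isProj {I : ℤ → ℤ → Submodule ℂ V}
    (hI : DirectSum.IsInternal (fun pq : ℤ × ℤ => I pq.1 pq.2)) :
    ∃ S π, IsProj I S π := by
  classical
  let A : ℤ × ℤ → Submodule ℂ V := fun pq => I pq.1 pq.2
  let _ : DirectSum.Decomposition A := hI.chooseDecomposition
  have hfin : {x | A x ≠ ⊥}.Finite :=
    WellFoundedGT.finite_ne_bot_of_iSupIndep hI.submodule_iSupIndep
  let π : ℤ × ℤ → Module.End ℂ V := fun x =>
    { toFun := fun v => (DirectSum.decompose A v x : V)
      map_add' := fun u v => by simp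
      map_smul' := fun t v => by rw [DirectSum.decompose_smul]; rfl }
  refine ⟨hfin.toFinset, π, fun x v => (DirectSum.decompose A v x).2,
    fun x v hv => DirectSum.decompose_of_mem_same A hv,
    fun x y hxy v hv => DirectSum.decompose_of_mem_ne A hv hxy, fun v => ?_⟩
  conv_rhs => rw [← DirectSum.sum_support_decompose A v]
  symm
  refine Finset.sum_subset ?_ ?_
  · intro x hx
    simp only [Set.Finite.mem_toFinset, Set.mem_ofPred_eq]
    intro hbot
    rw [DFinsupp.mem_support_iff] at hx
    apply hx
    have h1 : A x ≤ ⊥ := hbot.le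
    exact Subtype.ext ((Submodule.mem_bot ℂ).1 (h1 (DirectSum.decompose A v x).2))
  · intro x _ hx
    rw [DFinsupp.notMem_support_iff] at hx
    change (DirectSum.decompose A v x : V) = 0
    rw [hx]; rfl

variable {I : ℤ → ℤ → Submodule ℂ V} {S : Finset (ℤ × ℤ)} {π : ℤ × ℤ → Module.End ℂ V}

theorem IsProj.mem_iSup_iff (hπ : IsProj I S π) (P : ℤ × ℤ → Prop) (v : V) :
    (v ∈ ⨆ pq : ℤ × ℤ, ⨆ _ : P pq, I pq.1 pq.2) ↔ ∀ y, ¬ P y → π y v = 0 := by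
  constructor
  · intro hv y hy
    have : (⨆ pq : ℤ × ℤ, ⨆ _ : P pq, I pq.1 pq.2) ≤ LinearMap.ker (π y) := by
      refine iSup₂_le fun x hx w hw => ?_
      exact hπ.ne x y (by rintro rfl; exact hy hx) w hw
    exact this hv
  · intro h
    rw [← hπ.sum v]
    refine Submodule.sum_mem _ fun x _ => ?_
    by_cases hx : P x
    · exact Submodule.mem_iSup_of_mem x (Submodule.mem_iSup_of_mem hx (hπ.mem x v))
    · rw [h x hx]; exact Submodule.zero_mem _

theorem IsProj.mem_iff (hπ : IsProj I S π) (x : ℤ × ℤ) (v : V) :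
    v ∈ I x.1 x.2 ↔ ∀ y, y ≠ x → π y v = 0 := by
  have := hπ.mem_iSup_iff (fun y => y = x) v
  simpa using this

theorem IsProj.ext_end (hπ : IsProj I S π) {f g : Module.End ℂ V}
    (h : ∀ x : ℤ × ℤ, ∀ v ∈ I x.1 x.2, f v = g v) : f = g := by
  ext v
  rw [← hπ.sum v, map_sum, map_sum]
  exact Finset.sum_congr rfl fun x _ => h x _ (hπ.mem x v)

/-- The part strictly below `x` in both indices. -/
def Low (I : ℤ → ℤ → Submodule ℂ V) (x : ℤ × ℤ) : Submodule ℂ V :=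
  ⨆ pq : ℤ × ℤ, ⨆ _ : pq.1 < x.1 ∧ pq.2 < x.2, I pq.1 pq.2

/-- The `x`-part plus the part strictly below `x`. -/
def Leq (I : ℤ → ℤ → Submodule ℂ V) (x : ℤ × ℤ) : Submodule ℂ V :=
  I x.1 x.2 ⊔ Low I x

theorem Low_mono {x y : ℤ × ℤ} (h1 : y.1 < x.1) (h2 : y.2 < x.2) : Leq I y ≤ Low I x := by
  refine sup_le ?_ ?_
  · exact le_iSup₂_of_le y ⟨h1, h2⟩ le_rfl
  · exact iSup₂_le fun z hz => le_iSup₂_of_le z ⟨hz.1.trans h1, hz.2.trans h2⟩ le_rfl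

theorem Low_le_Leq (x : ℤ × ℤ) : Low I x ≤ Leq I x := le_sup_right

theorem I_le_Leq (x : ℤ × ℤ) : I x.1 x.2 ≤ Leq I x := le_sup_left

theorem IsProj.Low_zero (hπ : IsProj I S π) {x y : ℤ × ℤ} (h : ¬ (y.1 < x.1 ∧ y.2 < x.2))
    {v : V} (hv : v ∈ Low I x) : π y v = 0 :=
  (hπ.mem_iSup_iff _ v).1 hv y h

theorem IsProj.disj (hπ : IsProj I S π) {x : ℤ × ℤ} {v : V} (h1 : v ∈ I x.1 x.2)
    (h2 : v ∈ Low I x) : v = 0 := by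
  rw [← hπ.same x v h1]
  exact hπ.Low_zero (by simp) h2

theorem IsProj.sub_mem_Low (hπ : IsProj I S π) {x : ℤ × ℤ} {v : V} (h : v ∈ Leq I x) :
    v - π x v ∈ Low I x := by
  obtain ⟨a, ha, b, hb, rfl⟩ := Submodule.mem_sup.1 h
  rw [map_add, hπ.same x a ha, hπ.Low_zero (by simp) hb]
  simpa using hb

theorem IsProj.mem_Lambda_iff (hπ : IsProj I S π) (α : Module.End ℂ V) :
    α ∈ Lambda I ↔ ∀ x : ℤ × ℤ, ∀ v ∈ I x.1 x.2, α v ∈ Low I x := by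
  constructor
  · intro hα x v hv
    have : Lambda I ≤ (Low I x).comap (LinearMap.applyₗ (R := ℂ) v) := by
      refine iSup₂_le fun rs hrs β hβ => ?_
      change β v ∈ Low I x
      exact (Low_mono (x := x) (y := (x.1 + rs.1, x.2 + rs.2)) (by simpa using hrs.1)
        (by simpa using hrs.2)) (I_le_Leq (I := I) (x.1 + rs.1, x.2 + rs.2) (hβ x.1 x.2 v hv))
    exact this hα
  · intro h
    have hsum : α = ∑ x ∈ S, ∑ y ∈ S, π y * α * π x := by
      ext v
      simp only [LinearMap.sum_apply, Module.End.mul_apply]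
      simp only [hπ.sum]
      rw [← map_sum, hπ.sum]
    rw [hsum]
    refine Submodule.sum_mem _ fun x _ => Submodule.sum_mem _ fun y _ => ?_
    by_cases hxy : y.1 < x.1 ∧ y.2 < x.2
    · refine Submodule.mem_iSup_of_mem (y.1 - x.1, y.2 - x.2)
        (Submodule.mem_iSup_of_mem ⟨by simpa using hxy.1, by simpa using hxy.2⟩ ?_)
      intro p q v hv
      by_cases hpq : (p, q) = x
      · subst hpq
        simpa using hπ.mem y _
      · have : (π y * α * π x) v = 0 := by
          rw [Module.End.mul_apply, hπ.ne (p, q) x hpq v hv, map_zero]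
        rw [this]; exact Submodule.zero_mem _
    · have : π y * α * π x = 0 := by
        ext v
        exact hπ.Low_zero hxy (h x _ (hπ.mem x v))
      rw [this]; exact Submodule.zero_mem _

theorem IsProj.Lambda_Leq (hπ : IsProj I S π) {α : Module.End ℂ V} (hα : α ∈ Lambda I)
    {x : ℤ × ℤ} {v : V} (hv : v ∈ Leq I x) : α v ∈ Low I x := by
  have h := (hπ.mem_Lambda_iff α).1 hα
  have : Leq I x ≤ (Low I x).comap α := by
    refine sup_le (h x) (iSup₂_le fun y hy w hw => ?_)
    exact Low_mono hy.1 hy.2 (Low_le_Leq _ (h y w hw))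
  exact this hv

theorem IsProj.Lambda_mul (hπ : IsProj I S π) : Lambda I * Lambda I ≤ Lambda I := by
  rw [Submodule.mul_le]
  intro α hα β hβ
  rw [hπ.mem_Lambda_iff]
  intro x v hv
  exact hπ.Lambda_Leq hα (Low_le_Leq _ (hπ.Lambda_Leq hβ (I_le_Leq _ hv)))

theorem IsProj.unip_Leq (hπ : IsProj I S π) {E : Module.End ℂ V} (hE : E - 1 ∈ Lambda I)
    {x : ℤ × ℤ} {v : V} (hv : v ∈ Leq I x) : E v ∈ Leq I x := by
  have := Submodule.add_mem _ hv (Low_le_Leq _ (hπ.Lambda_Leq hE hv))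
  simpa using this

theorem IsProj.unip_eq_one (hπ : IsProj I S π) {E : Module.End ℂ V} (hE : E - 1 ∈ Lambda I)
    (h : ∀ x : ℤ × ℤ, ∀ v ∈ I x.1 x.2, E v ∈ I x.1 x.2) : E = 1 := by
  refine hπ.ext_end fun x v hv => ?_
  have h1 := hπ.Lambda_Leq hE (I_le_Leq _ hv)
  have h2 : (E - 1) v ∈ I x.1 x.2 := Submodule.sub_mem _ (h x v hv) hv
  have := hπ.disj h2 h1
  exact sub_eq_zero.1 this

variable {c : Conjugation V} {F W : ℤ → Submodule ℂ V}

theorem IsProj.Lambda_W (hπ : IsProj I S π)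
    (hI : IsDeligneBigrading c F W I) {α : Module.End ℂ V} (hα : α ∈ Lambda I) {k : ℤ} {v : V}
    (hv : v ∈ W k) : α v ∈ W (k - 1) := by
  have : W k ≤ (W (k - 1)).comap α := by
    rw [hI.hW k, hI.hW (k - 1)]
    refine iSup₂_le fun x hx w hw => ?_
    have := (hπ.mem_Lambda_iff α).1 hα x w hw
    have hle : Low I x ≤ ⨆ pq : ℤ × ℤ, ⨆ _ : pq.1 + pq.2 ≤ k - 1, I pq.1 pq.2 :=
      iSup₂_le fun y hy => le_iSup₂_of_le (f := fun (pq : ℤ × ℤ)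
        (_ : pq.1 + pq.2 ≤ k - 1) => I pq.1 pq.2) y (by omega) le_rfl
    exact hle this
  exact this hv

theorem IsProj.Lambda_nil (hπ : IsProj I S π) (h : IsMHS c F W)
    (hI : IsDeligneBigrading c F W I) : ∃ N : ℕ, Lambda I ^ N = ⊥ := by
  obtain ⟨a, ha⟩ := h.exists_W_bot
  obtain ⟨b, hb⟩ := h.exists_W_top
  have key : ∀ n : ℕ, ∀ α ∈ Lambda I ^ n, ∀ k, ∀ v ∈ W k, α v ∈ W (k - n) := by
    intro n
    induction n with
    | zero =>
      intro α hα k v hv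
      rw [Submodule.pow_zero] at hα
      obtain ⟨t, rfl⟩ := Submodule.mem_one.1 hα
      simpa [Module.algebraMap_end_apply] using Submodule.smul_mem _ t hv
    | succ n ih =>
      intro α hα k v hv
      rw [Submodule.pow_succ] at hα
      refine Submodule.mul_induction_on hα (fun m hm l hl => ?_) (fun x y hx hy => ?_)
      · have := ih m hm (k - 1) (l v) (hπ.Lambda_W hI hl hv)
        rwa [show k - ((n + 1 : ℕ) : ℤ) = k - 1 - n by push_cast; ring]
      · exact Submodule.add_mem _ hx hy
  refine ⟨(b - a).toNat, eq_bot_iff.2 fun α hα => ?_⟩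
  rw [Submodule.mem_bot]
  ext v
  have h1 := key _ α hα b v (by rw [hb]; trivial)
  have h2 : W (b - (b - a).toNat) ≤ W a := h.monotone_W (by omega)
  have h3 := h2 h1
  rw [ha] at h3
  exact h3

theorem conj_Leq (hI : IsDeligneBigrading c F W I) {x : ℤ × ℤ} :
    (∀ v ∈ Leq I x, c.toFun v ∈ Leq I x.swap) ∧ (∀ v ∈ Low I x, c.toFun v ∈ Low I x.swap) := by
  have h0 : ∀ y : ℤ × ℤ, I y.1 y.2 ≤ (Leq I y.swap).comap c.toFun :=
    fun y v hv => hI.conj_cond y.1 y.2 v hv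
  have h1 : Low I x ≤ (Low I x.swap).comap c.toFun := by
    refine iSup₂_le fun y hy w hw => ?_
    exact Low_mono (x := x.swap) (y := y.swap) hy.2 hy.1 (h0 y hw)
  have h2 : Leq I x ≤ (Leq I x.swap).comap c.toFun :=
    sup_le (h0 x) (h1.trans (Submodule.comap_mono (Low_le_Leq _)))
  exact ⟨fun v hv => h2 hv, fun v hv => h1 hv⟩

/-- Conjugation of endomorphisms. -/
def conjEnd (c : Conjugation V) : Module.End ℂ V →+* Module.End ℂ V where
  toFun α := (c.toFun.comp α).comp c.toFun
  map_one' := by ext v; simp [c.invol]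
  map_mul' := by intro α β; ext v; simp [c.invol]
  map_zero' := by ext v; simp
  map_add' := by intro α β; ext v; simp

theorem conjEnd_apply (α : Module.End ℂ V) (v : V) :
    conjEnd c α v = c.toFun (α (c.toFun v)) := rfl

theorem conjEnd_apply_conj (α : Module.End ℂ V) (v : V) :
    conjEnd c α (c.toFun v) = c.toFun (α v) := by
  rw [conjEnd_apply, c.invol]

theorem conjEnd_smul (t : ℂ) (α : Module.End ℂ V) :
    conjEnd c (t • α) = (starRingEnd ℂ t) • conjEnd c α := by
  ext v; simp [conjEnd_apply]

theorem IsProj.conjEnd_mem (hπ : IsProj I S π) (hI : IsDeligneBigrading c F W I)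
    {α : Module.End ℂ V} (hα : α ∈ Lambda I) : conjEnd c α ∈ Lambda I := by
  rw [hπ.mem_Lambda_iff]
  intro x v hv
  exact (conj_Leq hI (x := x.swap)).2 _
    (hπ.Lambda_Leq hα ((conj_Leq hI).1 v (I_le_Leq _ hv)))

/-- leading component of conjugation is involutive -/
theorem IsProj.lead_invol (hπ : IsProj I S π) (hI : IsDeligneBigrading c F W I)
    {x : ℤ × ℤ} {v : V} (hv : v ∈ I x.1 x.2) :
    π x (c.toFun (π x.swap (c.toFun v))) = v := by
  have h1 := hπ.sub_mem_Low ((conj_Leq hI).1 v (I_le_Leq x hv))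
  have h2 := (conj_Leq hI).2 _ h1
  have h3 := hπ.Low_zero (y := x) (x := x.swap.swap) (by simp) h2
  rw [map_sub, map_sub, c.invol, hπ.same x v hv] at h3
  exact (sub_eq_zero.1 h3).symm

/-- The element `g` with `c = g σ`. -/
theorem IsProj.exists_g (hπ : IsProj I S π) (hI : IsDeligneBigrading c F W I) :
    ∃ g : Module.End ℂ V, g - 1 ∈ Lambda I ∧ conjEnd c g * g = 1 ∧
      (∀ x : ℤ × ℤ, ∀ v ∈ I x.1 x.2, ∃ w ∈ I x.2 x.1, c.toFun v = g w) ∧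
      ∀ x : ℤ × ℤ, ∀ w ∈ I x.1 x.2, ∃ v ∈ I x.2 x.1, c.toFun v = g w := by
  let σ : V →ₛₗ[starRingEnd ℂ] V := ∑ x ∈ S, ((π x.swap).comp c.toFun).comp (π x)
  have hσ : ∀ x : ℤ × ℤ, ∀ v ∈ I x.1 x.2, σ v = π x.swap (c.toFun v) := by
    intro x v hv
    have : ∀ y ∈ S, y ≠ x → π y.swap (c.toFun (π y v)) = 0 := by
      intro y _ hy
      rw [hπ.ne x y hy.symm v hv]; simp
    have e : σ v = ∑ y ∈ S, π y.swap (c.toFun (π y v)) := by simp [σ]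
    rw [e]
    by_cases hx : x ∈ S
    · rw [Finset.sum_eq_single_of_mem x hx this, hπ.same x v hv]
    · rw [Finset.sum_eq_zero fun y hy => this y hy (by rintro rfl; exact hx hy)]
      have : v = 0 := by
        rw [← hπ.sum v]
        exact Finset.sum_eq_zero fun y hy => hπ.ne x y (by rintro rfl; exact hx hy) v hv
      rw [this]; simp
  have hσm : ∀ x : ℤ × ℤ, ∀ v ∈ I x.1 x.2, σ v ∈ I x.2 x.1 := by
    intro x v hv
    rw [hσ x v hv]
    exact hπ.mem x.swap _
  have hσσ : ∀ v, σ (σ v) = v := by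
    intro v
    have : (σ.comp σ : Module.End ℂ V) = 1 := by
      refine hπ.ext_end fun x v hv => ?_
      change σ (σ v) = v
      rw [hσ x.swap (σ v) (hσm x v hv), hσ x v hv]
      exact hπ.lead_invol hI hv
    exact congrArg (fun f : Module.End ℂ V => f v) this
  let g : Module.End ℂ V := c.toFun.comp σ
  have hg : ∀ v, g v = c.toFun (σ v) := fun v => rfl
  refine ⟨g, ?_, ?_, ?_, fun x w hw => ⟨σ w, hσm x w hw, rfl⟩⟩
  · rw [hπ.mem_Lambda_iff]
    intro x v hv
    have h1 := hσm x v hv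
    have h2 := hπ.sub_mem_Low ((conj_Leq hI (x := x.swap)).1 _ (I_le_Leq x.swap h1))
    rw [← hσ x.swap _ h1, hσσ] at h2
    exact h2
  · ext v
    simp [conjEnd_apply, hg, c.invol, hσσ]
  · intro x v hv
    exact ⟨σ v, hσm x v hv, by rw [hg, hσσ]⟩

/-- Key vanishing: `F^p ∩ W_{p+q} ∩ conj F^q ⊆ I^{p,q}`. -/
theorem IsProj.inter_le (hπ : IsProj I S π) (hI : IsDeligneBigrading c F W I)
    {x : ℤ × ℤ} {v : V} (h1 : v ∈ F x.1) (h2 : v ∈ W (x.1 + x.2)) (h3 : c.toFun v ∈ F x.2) :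
    v ∈ I x.1 x.2 := by
  rw [hI.hF, hπ.mem_iSup_iff] at h1 h3
  rw [hI.hW, hπ.mem_iSup_iff] at h2
  rw [hπ.mem_iff]
  have key : ∀ n : ℕ, ∀ y : ℤ × ℤ, y ≠ x → x.1 + x.2 - (y.1 + y.2) < n → π y v = 0 := by
    intro n
    induction n with
    | zero =>
      intro y hy hn
      exact h2 y (by push_cast at hn; omega)
    | succ n ih =>
      intro y hy hn
      by_cases hy1 : x.1 ≤ y.1
      swap
      · exact h1 y hy1
      by_cases hy2 : y.1 + y.2 ≤ x.1 + x.2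
      swap
      · exact h2 y hy2
      have hy3 : ¬ x.2 ≤ y.2 := by
        intro h
        exact hy (Prod.ext (by omega) (by omega))
      have e1 : π y.swap (c.toFun v) = 0 := h3 y.swap hy3
      have e2 : π y.swap (c.toFun v) = π y.swap (c.toFun (π y v)) := by
        have e3 : ∀ z ∈ S, z ≠ y → π y.swap (c.toFun (π z v)) = 0 := by
          intro z _ hzy
          by_cases hz : y.1 < z.1 ∧ y.2 < z.2
          · by_cases hzx : z = x
            · subst hzx; omega
            · rw [ih z hzx (by push_cast at hn; omega)]; simp
          · have m1 := (conj_Leq hI).1 _ (I_le_Leq z (hπ.mem z v))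
            have m2 := hπ.sub_mem_Low m1
            have m3 := hπ.Low_zero (y := y.swap) (by simpa [and_comm] using hz) m2
            rw [map_sub, hπ.ne z.swap y.swap (fun h => hzy (Prod.swap_injective h)) _
              (hπ.mem _ _), sub_zero] at m3
            exact m3
        conv_lhs => rw [← hπ.sum v]
        rw [map_sum, map_sum]
        by_cases hyS : y ∈ S
        · rw [Finset.sum_eq_single_of_mem y hyS e3]
        · rw [Finset.sum_eq_zero fun z hz => e3 z hz (by rintro rfl; exact hyS hz)]
          have : π y v = 0 := by
            rw [← hπ.sum v, map_sum]
            exact Finset.sum_eq_zero fun z hz =>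
              hπ.ne z y (by rintro rfl; exact hyS hz) _ (hπ.mem z v)
          rw [this]; simp
      have e4 := hπ.lead_invol hI (hπ.mem y v)
      rw [← e2, e1] at e4
      simpa using e4.symm
  intro y hy
  exact key (x.1 + x.2 - (y.1 + y.2) + 1).toNat y hy (by omega)


/-- A unipotent automorphism and its inverse. -/
structure UnipPair (I : ℤ → ℤ → Submodule ℂ V) (E E' : Module.End ℂ V) : Prop where
  mem : E - 1 ∈ Lambda I
  inv_mem : E' - 1 ∈ Lambda I
  mul_inv : E * E' = 1
  inv_mul : E' * E = 1

theorem UnipPair.apply_inv {E E' : Module.End ℂ V} (h : UnipPair I E E') (v : V) :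
    E (E' v) = v := by
  rw [← Module.End.mul_apply, h.mul_inv]; rfl

theorem UnipPair.inv_apply {E E' : Module.End ℂ V} (h : UnipPair I E E') (v : V) :
    E' (E v) = v := by
  rw [← Module.End.mul_apply, h.inv_mul]; rfl

theorem UnipPair.symm {E E' : Module.End ℂ V} (h : UnipPair I E E') : UnipPair I E' E :=
  ⟨h.inv_mem, h.mem, h.inv_mul, h.mul_inv⟩

theorem IsProj.unipPair_conj (hπ : IsProj I S π) (hI : IsDeligneBigrading c F W I)
    {E E' : Module.End ℂ V} (h : UnipPair I E E') :
    UnipPair I (conjEnd c E) (conjEnd c E') := by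
  refine ⟨?_, ?_, ?_, ?_⟩
  · rw [← map_one (conjEnd c), ← map_sub]; exact hπ.conjEnd_mem hI h.mem
  · rw [← map_one (conjEnd c), ← map_sub]; exact hπ.conjEnd_mem hI h.inv_mem
  · rw [← map_mul, h.mul_inv, map_one]
  · rw [← map_mul, h.inv_mul, map_one]

theorem submap_map (T : Submodule ℂ V) (E : Module.End ℂ V) :
    c.submap (T.map E) = (c.submap T).map (conjEnd c E) := by
  ext v
  constructor
  · rintro ⟨_, ⟨w, hw, rfl⟩, rfl⟩
    exact ⟨c.toFun w, ⟨w, hw, rfl⟩, conjEnd_apply_conj _ _⟩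
  · rintro ⟨_, ⟨w, hw, rfl⟩, rfl⟩
    exact ⟨E w, ⟨w, hw, rfl⟩, (conjEnd_apply_conj _ _).symm⟩

theorem IsProj.unip_W (hπ : IsProj I S π) (h : IsMHS c F W) (hI : IsDeligneBigrading c F W I)
    {E : Module.End ℂ V} (hE : E - 1 ∈ Lambda I) {k : ℤ} {v : V} (hv : v ∈ W k) :
    E v - v ∈ W (k - 1) ∧ E v ∈ W k := by
  have h1 : E v - v ∈ W (k - 1) := hπ.Lambda_W hI hE hv
  refine ⟨h1, ?_⟩
  have := Submodule.add_mem _ (h.monotone_W (by omega : k - 1 ≤ k) h1) hv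
  simpa using this

theorem IsProj.map_mkQ (hπ : IsProj I S π) (h : IsMHS c F W) (hI : IsDeligneBigrading c F W I)
    {E E' : Module.End ℂ V} (hE : UnipPair I E E') (T : Submodule ℂ V) (k : ℤ) :
    (T.map E ⊓ W k).map (W (k-1)).mkQ = (T ⊓ W k).map (W (k-1)).mkQ := by
  ext z
  constructor
  · rintro ⟨_, ⟨⟨w, hw, rfl⟩, hk⟩, rfl⟩
    have hwk := (hπ.unip_W h hI hE.inv_mem hk).2
    rw [hE.inv_apply] at hwk
    refine ⟨w, ⟨hw, hwk⟩, ?_⟩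
    symm
    exact (Submodule.Quotient.eq _).2 (hπ.unip_W h hI hE.mem hwk).1
  · rintro ⟨w, ⟨hw, hk⟩, rfl⟩
    have := hπ.unip_W h hI hE.mem hk
    exact ⟨E w, ⟨⟨w, hw, rfl⟩, this.2⟩, (Submodule.Quotient.eq _).2 this.1⟩

theorem IsProj.isMHS_map (hπ : IsProj I S π) (h : IsMHS c F W) (hI : IsDeligneBigrading c F W I)
    {E E' : Module.End ℂ V} (hE : UnipPair I E E') : IsMHS c (fun p => (F p).map E) W where
  antitone_F := fun a b hab => Submodule.map_mono (h.antitone_F hab)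
  exists_F_top := by
    obtain ⟨p, hp⟩ := h.exists_F_top
    refine ⟨p, eq_top_iff.2 fun v _ => ⟨E' v, ?_, hE.apply_inv v⟩⟩
    rw [hp]; trivial
  exists_F_bot := by
    obtain ⟨p, hp⟩ := h.exists_F_bot
    exact ⟨p, by simp [hp]⟩
  monotone_W := h.monotone_W
  exists_W_bot := h.exists_W_bot
  exists_W_top := h.exists_W_top
  real_W := h.real_W
  graded_sup := by
    intro k p
    rw [submap_map, hπ.map_mkQ h hI hE, hπ.map_mkQ h hI (hπ.unipPair_conj hI hE)]
    exact h.graded_sup k p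
  graded_inf := by
    intro k p
    rw [submap_map, hπ.map_mkQ h hI hE, hπ.map_mkQ h hI (hπ.unipPair_conj hI hE)]
    exact h.graded_inf k p

theorem map_iSup_cond (E : Module.End ℂ V) (P : ℤ × ℤ → Prop) :
    (⨆ pq : ℤ × ℤ, ⨆ _ : P pq, I pq.1 pq.2).map E =
      ⨆ pq : ℤ × ℤ, ⨆ _ : P pq, (I pq.1 pq.2).map E := by
  simp only [Submodule.map_iSup]

theorem internal_map (hI : DirectSum.IsInternal (fun pq : ℤ × ℤ => I pq.1 pq.2))
    {E E' : Module.End ℂ V} (hE : UnipPair I E E') :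
    DirectSum.IsInternal (fun pq : ℤ × ℤ => (I pq.1 pq.2).map E) := by
  let e : V ≃ₗ[ℂ] V := LinearEquiv.ofLinearMap E E' hE.mul_inv hE.inv_mul
  have h1 := hI.submodule_iSupIndep
  have h2 := hI.submodule_iSup_eq_top
  have h3 : iSupIndep (fun pq : ℤ × ℤ => (I pq.1 pq.2).map E) :=
    h1.map_orderIso (Submodule.orderIsoMapComap e)
  have h4 : (⨆ pq : ℤ × ℤ, (I pq.1 pq.2).map E) = ⊤ := by
    rw [← Submodule.map_iSup, h2]
    exact eq_top_iff.2 fun v _ => ⟨E' v, trivial, hE.apply_inv v⟩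
  exact DirectSum.isInternal_submodule_of_iSupIndep_of_iSup_eq_top h3 h4

theorem IsProj.isDeligne_map (hπ : IsProj I S π)
    (hI : IsDeligneBigrading c F W I) {E E' : Module.End ℂ V} (hE : UnipPair I E E') :
    IsDeligneBigrading c (fun p => (F p).map E) W (fun p q => (I p q).map E) := by
  refine ⟨internal_map hI.internal hE, ?_, ?_, ?_⟩
  · intro p
    beta_reduce
    rw [hI.hF p]
    exact map_iSup_cond E _
  · intro k
    rw [← map_iSup_cond E (fun pq => pq.1 + pq.2 ≤ k), ← hI.hW k]
    have hW1 : ∀ A : Module.End ℂ V, A - 1 ∈ Lambda I → ∀ v ∈ W k, A v ∈ W k := by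
      intro A hA v hv
      have h1 := hπ.Lambda_W hI hA hv
      have h2 : W (k - 1) ≤ W k := by
        rw [hI.hW k, hI.hW (k - 1)]
        exact iSup₂_le fun y hy => le_iSup₂_of_le (f := fun (pq : ℤ × ℤ)
          (_ : pq.1 + pq.2 ≤ k) => I pq.1 pq.2) y (by omega) le_rfl
      have := Submodule.add_mem _ (h2 h1) hv
      simpa using this
    ext v
    constructor
    · intro hv
      exact ⟨E' v, hW1 E' hE.inv_mem v hv, hE.apply_inv v⟩
    · rintro ⟨w, hw, rfl⟩
      exact hW1 E hE.mem w hw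
  · rintro p q _ ⟨v, hv, rfl⟩
    rw [← map_iSup_cond E (fun pq => pq.1 < q ∧ pq.2 < p), ← Submodule.map_sup]
    refine ⟨E' (c.toFun (E v)), ?_, hE.apply_inv _⟩
    have h1 : v ∈ Leq I (p, q) := I_le_Leq (p, q) hv
    have h2 : c.toFun (E v) ∈ Leq I (q, p) :=
      (conj_Leq hI (x := (p, q))).1 _ (hπ.unip_Leq hE.mem h1)
    have h3 : E' (c.toFun (E v)) ∈ Leq I (q, p) := hπ.unip_Leq hE.inv_mem h2
    exact h3

theorem split_of_split {J : ℤ → ℤ → Submodule ℂ V} (hI : IsDeligneBigrading c F W I)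
    (hJ : IsDeligneBigrading c F W J) (hs : ∀ p q, c.submap (J p q) = J q p) (p q : ℤ) :
    c.submap (I p q) ≤ I q p := by
  obtain ⟨S, π, hπ⟩ := exists_isProj hI.internal
  obtain ⟨S', π', hπ'⟩ := exists_isProj hJ.internal
  have hc : ∀ p q, ∀ v ∈ J p q, c.toFun v ∈ J q p := by
    intro p q v hv
    rw [← hs p q]; exact ⟨v, hv, rfl⟩
  have hJF : ∀ p q, J p q ≤ F p := by
    intro p q
    rw [hJ.hF p]
    exact le_iSup₂_of_le (f := fun (pq : ℤ × ℤ) (_ : p ≤ pq.1) => J pq.1 pq.2) (p, q) le_rfl le_rfl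
  have hJW : ∀ p q, J p q ≤ W (p + q) := by
    intro p q
    rw [hJ.hW]
    exact le_iSup₂_of_le (f := fun (pq : ℤ × ℤ) (_ : pq.1 + pq.2 ≤ p + q) => J pq.1 pq.2)
      (p, q) le_rfl le_rfl
  have hle : ∀ p q, J p q ≤ I p q := by
    intro p q v hv
    exact hπ.inter_le hI (x := (p, q)) (hJF p q hv) (hJW p q hv) (hJF q p (hc p q v hv))
  have hge : ∀ p q, I p q ≤ J p q := by
    intro p q v hv
    have e : v = π' (p, q) v := by
      conv_lhs => rw [← hπ.same (p, q) v hv, ← hπ'.sum v, map_sum]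
      have : ∀ x ∈ S', x ≠ (p, q) → π (p, q) (π' x v) = 0 := fun x _ hx =>
        hπ.ne x (p, q) hx _ (hle _ _ (hπ'.mem x v))
      by_cases hm : (p, q) ∈ S'
      · rw [Finset.sum_eq_single_of_mem _ hm this]
        exact hπ.same (p, q) _ (hle _ _ (hπ'.mem (p, q) v))
      · rw [Finset.sum_eq_zero fun x hx => this x hx (by rintro rfl; exact hm hx)]
        rw [← hπ'.sum v, map_sum]
        symm
        exact Finset.sum_eq_zero fun z hz =>
          hπ'.ne z (p, q) (by rintro rfl; exact hm hz) _ (hπ'.mem z v)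
    rw [e]
    exact hπ'.mem (p, q) v
  rintro _ ⟨v, hv, rfl⟩
  exact hle _ _ (hc _ _ v (hge _ _ hv))

end Bigrading

/-- **Deligne splitting.** For every mixed Hodge structure `(F,W)` there is a unique
real element `δ ∈ Λ_{(F,W)}` such that `(exp(-iδ)·F, W)` is a mixed Hodge structure
split over `ℝ`, i.e. whose Deligne bigrading satisfies `conj(J^{p,q}) = J^{q,p}`. -/
theorem deligne_splitting_existsUnique
    {V : Type*} [AddCommGroup V] [Module ℂ V] [FiniteDimensional ℂ V]
    (c : Conjugation V) (F W : ℤ → Submodule ℂ V) (h : IsMHS c F W)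
    (I : ℤ → ℤ → Submodule ℂ V) (hI : IsDeligneBigrading c F W I) :
    ∃! δ : Module.End ℂ V,
      δ ∈ Lambda I ∧ (∀ v, c.toFun (δ v) = δ (c.toFun v)) ∧
      IsMHS c (fun p => (F p).map (expNil ((-Complex.I) • δ))) W ∧
      ∃ J : ℤ → ℤ → Submodule ℂ V,
        IsDeligneBigrading c (fun p => (F p).map (expNil ((-Complex.I) • δ))) W J ∧
        ∀ p q : ℤ, c.submap (J p q) = J q p := by
  classical
  obtain ⟨S, π, hπ⟩ := exists_isProj hI.internal
  obtain ⟨N, hN⟩ := hπ.Lambda_nil h hI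
  have hL := hπ.Lambda_mul
  obtain ⟨g, hg1, hg2, hg3, hg4⟩ := hπ.exists_g hI
  obtain ⟨X, hX, hXg⟩ := expNil_surj hL hN hg1
  have hXc : conjEnd c X = -X := by
    refine expNil_inj hL hN (hπ.conjEnd_mem hI hX) (Submodule.neg_mem _ hX) ?_
    rw [← map_expNil _ (L_nil hN hX), hXg]
    have e := expNil_mul_neg (L_nil hN hX)
    rw [hXg] at e
    exact left_inv_eq_right_inv hg2 e
  -- conjugation of `exp (-iδ)` for real `δ`
  have hconj : ∀ δ ∈ Lambda I, (∀ v, c.toFun (δ v) = δ (c.toFun v)) →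
      conjEnd c (expNil ((-Complex.I) • δ)) = expNil (Complex.I • δ) := by
    intro δ hδ hr
    rw [map_expNil _ (L_nil hN (Submodule.smul_mem _ _ hδ)), conjEnd_smul]
    have : conjEnd c δ = δ := by
      ext v
      rw [conjEnd_apply, ← hr, c.invol]
    rw [this]
    simp
  have hU : ∀ δ ∈ Lambda I, UnipPair I (expNil ((-Complex.I) • δ)) (expNil (Complex.I • δ)) := by
    intro δ hδ
    have m1 : Complex.I • δ ∈ Lambda I := Submodule.smul_mem _ _ hδ
    have m2 : (-Complex.I) • δ ∈ Lambda I := Submodule.smul_mem _ _ hδ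
    have n1 := L_nil hN m1
    refine ⟨expNil_sub_one_mem hL m2, expNil_sub_one_mem hL m1, ?_, ?_⟩
    · rw [neg_smul]; exact expNil_neg_mul n1
    · rw [neg_smul]; exact expNil_mul_neg n1
  refine ⟨(Complex.I / 2) • X, ?_, ?_⟩
  · have hδ : (Complex.I / 2) • X ∈ Lambda I := Submodule.smul_mem _ _ hX
    have hr : ∀ v, c.toFun (((Complex.I / 2) • X) v) = ((Complex.I / 2) • X) (c.toFun v) := by
      intro v
      rw [← conjEnd_apply_conj, conjEnd_smul, hXc]
      congr 1
      simp [neg_div, map_ofNat]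
    have hUδ := hU _ hδ
    refine ⟨hδ, hr, hπ.isMHS_map h hI hUδ, _, hπ.isDeligne_map hI hUδ, ?_⟩
    have hle : ∀ p q : ℤ, c.submap ((I p q).map (expNil ((-Complex.I) • (Complex.I / 2) • X))) ≤
        (I q p).map (expNil ((-Complex.I) • (Complex.I / 2) • X)) := by
      intro p q
      rw [submap_map, hconj _ hδ hr]
      rintro _ ⟨_, ⟨v, hv, rfl⟩, rfl⟩
      obtain ⟨w, hw, e⟩ := hg3 (p, q) v hv
      refine ⟨w, hw, ?_⟩
      rw [e, ← hXg, ← Module.End.mul_apply, ← expNil_add]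
      · congr 2
        rw [smul_smul, smul_smul]
        conv_rhs => rw [← one_smul ℂ X, smul_smul, ← add_smul]
        congr 1
        have := Complex.I_mul_I
        linear_combination -this
      · exact ((Commute.refl X).smul_left _).smul_left _
      · exact L_nil hN (Submodule.smul_mem _ _ hδ)
      · exact L_nil hN hX
    intro p q
    refine le_antisymm (hle p q) fun v hv => ?_
    exact ⟨c.toFun v, hle q p ⟨v, hv, rfl⟩, c.invol v⟩
  · rintro δ ⟨hδ, hr, hM, J, hJ, hJs⟩
    have hUδ := hU δ hδ
    have hD := hπ.isDeligne_map hI hUδ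
    have hs := split_of_split hD hJ hJs
    have n1 : IsNilpotent (Complex.I • δ) := L_nil hN (Submodule.smul_mem _ _ hδ)
    have hone : expNil (Complex.I • δ) * expNil (Complex.I • δ) * g = 1 := by
      refine hπ.unip_eq_one ?_ ?_
      · have u := hUδ.inv_mem
        have hmul : ∀ A B : Module.End ℂ V, A - 1 ∈ Lambda I → B - 1 ∈ Lambda I →
            A * B - 1 ∈ Lambda I := by
          intro A B hA hB
          have : A * B - 1 = (A - 1) * (B - 1) + (A - 1) + (B - 1) := by noncomm_ring
          rw [this]
          exact Submodule.add_mem _ (Submodule.add_mem _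
            (hL (Submodule.mul_mem_mul hA hB)) hA) hB
        exact hmul _ _ (hmul _ _ u u) hg1
      · intro x w hw
        obtain ⟨v, hv, e⟩ := hg4 x w hw
        have h1 := hs x.2 x.1 ⟨_, ⟨v, hv, rfl⟩, rfl⟩
        obtain ⟨u, hu, e2⟩ := h1
        rw [← conjEnd_apply_conj, hconj δ hδ hr, e] at e2
        rw [mul_assoc, Module.End.mul_apply, Module.End.mul_apply, ← e2,
          ← Module.End.mul_apply, hUδ.inv_mul]
        exact hu
    have n2 : (2 * Complex.I) • δ ∈ Lambda I := Submodule.smul_mem _ _ hδ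
    have hX2 : X = -((2 * Complex.I) • δ) := by
      refine expNil_inj hL hN hX (Submodule.neg_mem _ n2) ?_
      rw [hXg]
      rw [← expNil_add (Commute.refl _) n1 n1, ← add_smul, ← two_mul] at hone
      exact (left_inv_eq_right_inv (expNil_neg_mul (L_nil hN n2)) hone).symm
    rw [hX2, smul_neg, smul_smul, ← neg_smul]
    conv_lhs => rw [← one_smul ℂ δ]
    congr 1
    have := Complex.I_mul_I
    linear_combination this
end
end

section
/- Let V be a finite-dimensional complex vector space, a > 0, and (B_m)_{m≥2} a sequence in End(V) such that Σ_{m≥2} B_m y^{−m} converges absolutely for every y > a. Let g : (a,∞) → GL(V) be a C¹ function satisfying g(y)^{−1}·g'(y) = Σ_{m≥2} B_m y^{−m}. Then g(∞) := lim_{y→∞} g(y) exists and is invertible, and there exist g_k, f_k ∈ End(V) (k ≥ 1) such that for all sufficiently large y the convergent expansions g(y) = g(∞)·(1 + Σ_{k≥1} g_k y^{−k}) and g(y)^{−1} = (1 + Σ_{k≥1} f_k y^{−k})·g(∞)^{−1} hold. -/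
noncomputable section

def seqAux {A : Type*} [NormedAddCommGroup A] [NormedSpace ℝ A]
    (m : A → A → A) (D : ℕ → A) (c0 : A) : ℕ → A
  | 0 => c0
  | n + 1 => ((n + 1 : ℝ)⁻¹) • ∑ i : Fin (n + 1), m (seqAux m D c0 i) (D (n - i))

lemma seqAux_exists {A : Type*} [NormedAddCommGroup A] [NormedSpace ℝ A]
    (m : A → A → A) (hm : ∀ a b, ‖m a b‖ ≤ ‖a‖ * ‖b‖) (D : ℕ → A) (c0 : A) (hc0 : ‖c0‖ ≤ 1)
    (K : ℝ) (hK : 0 < K) (hD : ∀ n, ‖D n‖ ≤ K * K ^ n) :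
    ∃ c : ℕ → A, c 0 = c0 ∧ (∀ n, ‖c n‖ ≤ K ^ n) ∧
      ∀ n : ℕ, ((n : ℝ) + 1) • c (n + 1) =
        ∑ p ∈ Finset.HasAntidiagonal.antidiagonal n, m (c p.1) (D p.2) := by
  have key : ∀ n : ℕ, ((n : ℝ) + 1) • seqAux m D c0 (n + 1) =
        ∑ p ∈ Finset.HasAntidiagonal.antidiagonal n, m (seqAux m D c0 p.1) (D p.2) := by
    intro n
    rw [seqAux, smul_smul, mul_inv_cancel₀ (by positivity), one_smul,
      Finset.Nat.sum_antidiagonal_eq_sum_range_succ_mk, Finset.sum_range]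
  refine ⟨seqAux m D c0, by rw [seqAux], ?_, key⟩
  intro n
  induction n using Nat.strong_induction_on with
  | _ n ih =>
    cases n with
    | zero => simpa [seqAux] using hc0
    | succ n =>
      have h1 : ‖((n : ℝ) + 1) • seqAux m D c0 (n + 1)‖ ≤ ((n : ℝ) + 1) * K ^ (n + 1) := by
        rw [key]
        refine (norm_sum_le _ _).trans ?_
        have : ∀ p ∈ Finset.HasAntidiagonal.antidiagonal n,
            ‖m (seqAux m D c0 p.1) (D p.2)‖ ≤ K ^ (n + 1) := by
          intro p hp
          have hp' := Finset.HasAntidiagonal.mem_antidiagonal.1 hp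
          calc _ ≤ _ := hm _ _
            _ ≤ K ^ p.1 * (K * K ^ p.2) :=
              mul_le_mul (ih _ (by omega)) (hD _) (norm_nonneg _) (by positivity)
            _ = K ^ (n + 1) := by rw [← hp']; ring
        refine (Finset.sum_le_card_nsmul _ _ _ this).trans ?_
        simp
      rw [norm_smul, Real.norm_of_nonneg (by positivity)] at h1
      exact le_of_mul_le_mul_left h1 (by positivity)

lemma summable_aux {A : Type*} [NormedAddCommGroup A] [NormedSpace ℝ A]
    (c : ℕ → A) (K : ℝ) (hK : 0 < K) (C : ℝ) (hc : ∀ n, ‖c n‖ ≤ C * K ^ n) (x : ℝ)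
    (hx : |x| < 1 / (2 * K)) : Summable fun n => ‖x ^ n • c n‖ := by
  have hC : 0 ≤ C := by simpa using (norm_nonneg _).trans (hc 0)
  have hx1 : |x| * K ≤ 1 / 2 := by
    rw [lt_div_iff₀ (by positivity)] at hx
    linarith
  refine Summable.of_nonneg_of_le (fun _ => norm_nonneg _) (fun n => ?_)
    ((summable_geometric_of_lt_one (r := (1 / 2 : ℝ)) (by norm_num) (by norm_num)).mul_left C)
  rw [norm_smul, norm_pow, Real.norm_eq_abs]
  calc |x| ^ n * ‖c n‖ ≤ |x| ^ n * (C * K ^ n) := by gcongr; exact hc n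
    _ = C * (|x| * K) ^ n := by ring
    _ ≤ C * (1 / 2) ^ n := by gcongr

lemma hasDerivAt_aux {A : Type*} [NormedAddCommGroup A] [NormedSpace ℝ A] [CompleteSpace A]
    (c : ℕ → A) (K : ℝ) (hK : 0 < K) (hc : ∀ n, ‖c n‖ ≤ K ^ n) (x : ℝ)
    (hx : |x| < 1 / (2 * K)) :
    HasDerivAt (fun t : ℝ => ∑' n, t ^ n • c n)
      (∑' n : ℕ, x ^ n • (((n : ℝ) + 1) • c (n + 1))) x := by
  have hmem : ∀ t : ℝ, t ∈ Metric.ball (0 : ℝ) (1 / (2 * K)) ↔ |t| < 1 / (2 * K) := by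
    intro t; simp
  have hs : Summable fun n : ℕ => (2 * K) * ((n : ℝ) ^ 1 * (1 / 2 : ℝ) ^ n) :=
    (summable_pow_mul_geometric_of_norm_lt_one (R := ℝ) 1 (r := 1 / 2) (by norm_num)).mul_left _
  have hb : ∀ (n : ℕ) (t : ℝ), t ∈ Metric.ball (0 : ℝ) (1 / (2 * K)) →
      ‖((n : ℝ) * t ^ (n - 1)) • c n‖ ≤ (2 * K) * ((n : ℝ) ^ 1 * (1 / 2 : ℝ) ^ n) := by
    intro n t ht
    rw [hmem] at ht
    cases n with
    | zero => simp
    | succ n =>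
      have hx1 : |t| * K ≤ 1 / 2 := by
        rw [lt_div_iff₀ (by positivity)] at ht
        linarith
      rw [norm_smul, norm_mul, norm_pow, Real.norm_eq_abs, Real.norm_eq_abs, Nat.abs_cast]
      simp only [Nat.add_sub_cancel]
      calc ((n + 1 : ℕ) : ℝ) * |t| ^ n * ‖c (n + 1)‖
          ≤ ((n + 1 : ℕ) : ℝ) * |t| ^ n * K ^ (n + 1) := by gcongr; exact hc _
        _ = ((n + 1 : ℕ) : ℝ) * K * (|t| * K) ^ n := by ring
        _ ≤ ((n + 1 : ℕ) : ℝ) * K * (1 / 2) ^ n := by gcongr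
        _ = _ := by ring
  have hd := hasDerivAt_tsum_of_isPreconnected (g := fun (n : ℕ) (t : ℝ) => t ^ n • c n)
    (g' := fun (n : ℕ) (t : ℝ) => ((n : ℝ) * t ^ (n - 1)) • c n) (y₀ := x) (y := x) hs
    Metric.isOpen_ball (convex_ball (0 : ℝ) (1 / (2 * K))).isPreconnected
    (fun n y _ => (hasDerivAt_pow n y).smul_const (c n)) hb ((hmem x).2 hx)
    (summable_aux c K hK 1 (by simpa using hc) x hx).of_norm ((hmem x).2 hx)
  convert hd using 1
  have hsm : Summable fun n : ℕ => ((n : ℝ) * x ^ (n - 1)) • c n :=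
    Summable.of_norm_bounded hs (fun n => hb n x ((hmem x).2 hx))
  rw [hsm.tsum_eq_zero_add]
  simp [smul_smul, mul_comm]

lemma mul_series_aux {A : Type*} [NormedRing A] [NormedAlgebra ℝ A] [CompleteSpace A]
    (c d : ℕ → A) (x : ℝ) (hc : Summable fun n => ‖x ^ n • c n‖)
    (hd : Summable fun n => ‖x ^ n • d n‖) :
    (∑' n, x ^ n • c n) * (∑' n, x ^ n • d n) =
      ∑' n, x ^ n • ∑ p ∈ Finset.HasAntidiagonal.antidiagonal n, c p.1 * d p.2 := by
  rw [tsum_mul_tsum_eq_tsum_sum_antidiagonal_of_summable_norm hc hd]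
  congr 1
  ext n
  rw [Finset.smul_sum]
  refine Finset.sum_congr rfl fun p hp => ?_
  rw [← Finset.HasAntidiagonal.mem_antidiagonal.1 hp, smul_mul_smul_comm, pow_add]

lemma series_solutions {A : Type*} [NormedRing A] [NormedAlgebra ℝ A] [CompleteSpace A]
    (h1 : ‖(1 : A)‖ ≤ 1) (D : ℕ → A) (K : ℝ) (hK : 0 < K) (hD : ∀ n, ‖D n‖ ≤ K * K ^ n) :
    ∃ c e : ℕ → A, c 0 = 1 ∧ e 0 = 1 ∧ (∀ n, ‖c n‖ ≤ K ^ n) ∧ (∀ n, ‖e n‖ ≤ K ^ n) ∧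
      (∀ x : ℝ, |x| < 1 / (2 * K) → HasDerivAt (fun t : ℝ => ∑' n, t ^ n • c n)
        (-((∑' n, x ^ n • c n) * ∑' n, x ^ n • D n)) x) ∧
      (∀ x : ℝ, |x| < 1 / (2 * K) → HasDerivAt (fun t : ℝ => ∑' n, t ^ n • e n)
        ((∑' n, x ^ n • D n) * (∑' n, x ^ n • e n)) x) ∧
      (∀ x : ℝ, |x| < 1 / (2 * K) → (∑' n, x ^ n • c n) * (∑' n, x ^ n • e n) = 1) := by
  obtain ⟨c, c0, hc, hcr⟩ := seqAux_exists (fun a b : A => -(a * b))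
    (fun a b => by simpa using norm_mul_le a b) D 1 h1 K hK hD
  obtain ⟨e, e0, he, her⟩ := seqAux_exists (fun a b : A => b * a)
    (fun a b => by simpa [mul_comm] using norm_mul_le b a) D 1 h1 K hK hD
  have hcd : ∀ x : ℝ, |x| < 1 / (2 * K) → HasDerivAt (fun t : ℝ => ∑' n, t ^ n • c n)
        (-((∑' n, x ^ n • c n) * ∑' n, x ^ n • D n)) x := by
    intro x hx
    refine (hasDerivAt_aux c K hK hc x hx).congr_deriv ?_
    symm
    rw [mul_series_aux c D x (summable_aux c K hK 1 (by simpa using hc) x hx)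
      (summable_aux D K hK K hD x hx), ← tsum_neg]
    congr 1
    ext n
    rw [hcr, Finset.sum_neg_distrib, smul_neg]
  have hed : ∀ x : ℝ, |x| < 1 / (2 * K) → HasDerivAt (fun t : ℝ => ∑' n, t ^ n • e n)
        ((∑' n, x ^ n • D n) * (∑' n, x ^ n • e n)) x := by
    intro x hx
    refine (hasDerivAt_aux e K hK he x hx).congr_deriv ?_
    symm
    rw [mul_series_aux D e x (summable_aux D K hK K hD x hx)
      (summable_aux e K hK 1 (by simpa using he) x hx)]
    congr 1
    ext n
    rw [her, ← Finset.Nat.sum_antidiagonal_swap]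
    simp
  refine ⟨c, e, c0, e0, hc, he, hcd, hed, ?_⟩
  intro x hx
  have hz : ∀ t : ℝ, |t| < 1 / (2 * K) → HasDerivAt
      (fun t : ℝ => (∑' n, t ^ n • c n) * (∑' n, t ^ n • e n)) 0 t := by
    intro t ht
    refine ((hcd t ht).mul (hed t ht)).congr_deriv ?_
    noncomm_ring
  have hmem : ∀ t : ℝ, t ∈ Metric.ball (0 : ℝ) (1 / (2 * K)) ↔ |t| < 1 / (2 * K) := by
    intro t; simp
  have h0 : ∀ c : ℕ → A, ∑' n, (0 : ℝ) ^ n • c n = c 0 := by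
    intro c
    rw [tsum_eq_single 0 (by intro n hn; simp [hn])]
    simp
  have := (Metric.isOpen_ball).is_const_of_deriv_eq_zero
    (convex_ball (0 : ℝ) (1 / (2 * K))).isPreconnected
    (fun t ht => (hz t ((hmem t).1 ht)).differentiableAt.differentiableWithinAt)
    (fun t ht => (hz t ((hmem t).1 ht)).deriv) ((hmem x).2 hx)
    (Metric.mem_ball_self (by positivity))
  rw [this]
  simp only [h0, c0, e0, mul_one]

lemma one_add_aux {A : Type*} [NormedRing A] [NormedAlgebra ℝ A] [CompleteSpace A]
    (c : ℕ → A) (c0 : c 0 = 1) (y : ℝ) (hc : Summable fun n => ‖(y⁻¹) ^ n • c n‖) (hy : 0 < y) :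
    (Summable fun k : ℕ => ‖c (k + 1)‖ * y ^ (-(k : ℤ) - 1)) ∧
    ∑' n, (y⁻¹) ^ n • c n = 1 + ∑' k : ℕ, (y ^ (-(k : ℤ) - 1) : ℝ) • c (k + 1) := by
  have hp : ∀ k : ℕ, y ^ (-(k : ℤ) - 1) = (y⁻¹) ^ (k + 1) := by
    intro k
    rw [inv_pow, ← zpow_natCast, ← zpow_neg]
    congr 1
    push_cast
    ring
  constructor
  · refine ((summable_nat_add_iff 1).2 hc).congr fun k => ?_
    rw [hp, norm_smul, norm_pow, Real.norm_of_nonneg (by positivity), mul_comm]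
  · rw [hc.of_norm.tsum_eq_zero_add, c0]
    simp [hp]

theorem asymptotic_expansion_of_ode_solution
    {V : Type*} [NormedAddCommGroup V] [NormedSpace ℂ V] [FiniteDimensional ℂ V]
    (a : ℝ) (ha : 0 < a) (B : ℕ → (V →L[ℂ] V))
    (hB : ∀ y : ℝ, a < y → Summable fun m : ℕ => ‖B m‖ * y ^ (-(m : ℤ) - 2))
    (g : ℝ → (V ≃L[ℂ] V))
    (hg : ∀ y : ℝ, a < y → HasDerivAt (fun t => (g t : V →L[ℂ] V))
      ((g y : V →L[ℂ] V) * ∑' m : ℕ, (y ^ (-(m : ℤ) - 2) : ℝ) • B m) y) :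
    ∃ G : V ≃L[ℂ] V,
      Filter.Tendsto (fun y : ℝ => (g y : V →L[ℂ] V)) Filter.atTop
        (nhds (G : V →L[ℂ] V)) ∧
      ∃ gs fs : ℕ → (V →L[ℂ] V), ∃ b : ℝ, a ≤ b ∧ ∀ y : ℝ, b < y →
        (Summable fun k : ℕ => ‖gs k‖ * y ^ (-(k : ℤ) - 1)) ∧
        (Summable fun k : ℕ => ‖fs k‖ * y ^ (-(k : ℤ) - 1)) ∧
        (g y : V →L[ℂ] V)
          = (G : V →L[ℂ] V) * (1 + ∑' k : ℕ, (y ^ (-(k : ℤ) - 1) : ℝ) • gs k) ∧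
        ((g y).symm : V →L[ℂ] V)
          = (1 + ∑' k : ℕ, (y ^ (-(k : ℤ) - 1) : ℝ) • fs k) * (G.symm : V →L[ℂ] V) := by
  have hcomplete : CompleteSpace V := FiniteDimensional.complete ℂ V
  have hp : ∀ (y : ℝ) (_ : 0 < y) (k : ℕ), y ^ (-(k : ℤ) - 2) = (y⁻¹) ^ 2 * (y⁻¹) ^ k := by
    intro y hy k
    rw [← pow_add, inv_pow, ← zpow_natCast, ← zpow_neg]
    congr 1
    push_cast
    ring
  obtain ⟨K, hK, haK, hD⟩ : ∃ K : ℝ, 0 < K ∧ a < K ∧ ∀ n, ‖B n‖ ≤ K * K ^ n := by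
    have hs := hB (a + 1) (by linarith)
    obtain ⟨M, hM⟩ := hs.tendsto_atTop_zero.bddAbove_range
    have hM' : ∀ n, ‖B n‖ ≤ M * (a + 1) ^ 2 * (a + 1) ^ n := by
      intro n
      have := hM (Set.mem_range_self n)
      simp only [hp (a + 1) (by linarith) n] at this
      have hpos : 0 < (a + 1) ^ 2 * (a + 1) ^ n := by positivity
      rw [inv_pow, inv_pow, ← mul_inv, ← div_eq_mul_inv, div_le_iff₀ hpos] at this
      linarith
    refine ⟨max (M * (a + 1) ^ 2) (a + 1), lt_max_of_lt_right (by linarith),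
      lt_max_of_lt_right (by linarith), fun n => (hM' n).trans ?_⟩
    gcongr
    · exact le_max_left _ _
    · exact le_max_right _ _
  obtain ⟨c, e, c0, e0, hc, he, hcd, hed, hce⟩ :=
    series_solutions (A := V →L[ℂ] V) ContinuousLinearMap.norm_id_le B K hK hD
  have hec : ∀ x : ℝ, |x| < 1 / (2 * K) → (∑' n, x ^ n • e n) * (∑' n, x ^ n • c n) = 1 := by
    intro x hx
    have h := hce x hx
    generalize (∑' n, x ^ n • c n) = p at h ⊢
    generalize (∑' n, x ^ n • e n) = q at h ⊢
    have h' : (p : V →ₗ[ℂ] V) * (q : V →ₗ[ℂ] V) = 1 := by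
      ext v; exact congr($h v)
    have h'' := mul_eq_one_comm.1 h'
    ext v
    exact congr($h'' v)
  have hd : ∀ x ∈ Set.Ioo (0 : ℝ) (1 / (2 * K)), HasDerivAt
      (fun t : ℝ => (g t⁻¹ : V →L[ℂ] V) * (∑' n, t ^ n • e n)) 0 x := by
    intro x hx
    have hx' : |x| < 1 / (2 * K) := by rw [abs_of_pos hx.1]; exact hx.2
    have hax : a < x⁻¹ := by
      have h2 := hx.2
      rw [lt_div_iff₀ (by positivity)] at h2
      rw [lt_inv_comm₀ ha hx.1, lt_inv_comm₀ hx.1 ha, ← one_div, lt_div_iff₀ hx.1]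
      nlinarith [hx.1]
    have h1 := (hg x⁻¹ hax).scomp x (hasDerivAt_inv hx.1.ne')
    have h2 : HasDerivAt (fun t : ℝ => (g t⁻¹ : V →L[ℂ] V))
        (-((g x⁻¹ : V →L[ℂ] V) * ∑' n, x ^ n • B n)) x := by
      refine HasDerivAt.congr_deriv h1 ?_
      symm
      simp only [hp _ (inv_pos.2 hx.1), inv_inv, mul_smul]
      rw [tsum_const_smul'', mul_smul_comm, smul_smul]
      have : -(x ^ 2)⁻¹ * x ^ 2 = -1 := by
        have := hx.1.ne'
        field_simp
      rw [this, neg_one_smul]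
    refine (h2.mul (hed x hx')).congr_deriv ?_
    noncomm_ring
  obtain ⟨C, hC⟩ := (isOpen_Ioo).exists_is_const_of_deriv_eq_zero
    (convex_Ioo (0 : ℝ) (1 / (2 * K))).isPreconnected
    (fun t ht => (hd t ht).differentiableAt.differentiableWithinAt)
    (fun t ht => (hd t ht).deriv)
  have hgi : ∀ y, (g y : V →L[ℂ] V) * ((g y).symm : V →L[ℂ] V) = 1 := by
    intro y; ext v; simp
  have hig : ∀ y, ((g y).symm : V →L[ℂ] V) * (g y : V →L[ℂ] V) = 1 := by
    intro y; ext v; simp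
  have hy : ∀ y : ℝ, 2 * K < y → y⁻¹ ∈ Set.Ioo (0 : ℝ) (1 / (2 * K)) ∧ |y⁻¹| < 1 / (2 * K) := by
    intro y hy
    have hy0 : 0 < y := by linarith
    have : y⁻¹ < 1 / (2 * K) := by
      rw [one_div]; exact inv_strictAnti₀ (by positivity) hy
    exact ⟨⟨inv_pos.2 hy0, this⟩, by rwa [abs_of_pos (inv_pos.2 hy0)]⟩
  have hgC : ∀ y : ℝ, 2 * K < y → (g y : V →L[ℂ] V) = C * ∑' n, (y⁻¹) ^ n • c n := by
    intro y h
    have := hC _ (hy y h).1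
    simp only [inv_inv] at this
    rw [← this, mul_assoc, hec _ (hy y h).2, mul_one]
  obtain ⟨C', hCC', hC'C, hC'⟩ : ∃ C' : V →L[ℂ] V, C * C' = 1 ∧ C' * C = 1 ∧
      ∀ y : ℝ, 2 * K < y → ((g y).symm : V →L[ℂ] V) = (∑' n, (y⁻¹) ^ n • e n) * C' := by
    have hinv : ∀ y : ℝ, 2 * K < y →
        C * ((∑' n, (y⁻¹) ^ n • c n) * ((g y).symm : V →L[ℂ] V)) = 1 ∧
        ((∑' n, (y⁻¹) ^ n • c n) * ((g y).symm : V →L[ℂ] V)) * C = 1 := by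
      intro y h
      constructor
      · rw [← mul_assoc, ← hgC y h, hgi]
      · have := hC _ (hy y h).1
        simp only [inv_inv] at this
        rw [← this, mul_assoc, ← mul_assoc _ (g y : V →L[ℂ] V), hig, one_mul, hce _ (hy y h).2]
    refine ⟨_, (hinv (2 * K + 1) (by linarith)).1, (hinv (2 * K + 1) (by linarith)).2, ?_⟩
    intro y h
    have : ((∑' n, (y⁻¹) ^ n • c n) * ((g y).symm : V →L[ℂ] V)) =
        ((∑' n, ((2 * K + 1)⁻¹) ^ n • c n) * ((g (2 * K + 1)).symm : V →L[ℂ] V)) :=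
      left_inv_eq_right_inv (hinv y h).2 (hinv (2 * K + 1) (by linarith)).1
    rw [← this, ← mul_assoc, hec _ (hy y h).2, one_mul]
  let G : V ≃L[ℂ] V := ContinuousLinearEquiv.equivOfInverse C C'
    (fun v => congr($hC'C v)) (fun v => congr($hCC' v))
  have hG : (G : V →L[ℂ] V) = C := by ext v; rfl
  have hG' : (G.symm : V →L[ℂ] V) = C' := by ext v; rfl
  refine ⟨G, ?_, fun k => c (k + 1), fun k => e (k + 1), 2 * K, by linarith, ?_⟩
  · rw [hG]
    have h0 : ∑' n, (0 : ℝ) ^ n • c n = 1 := by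
      rw [tsum_eq_single 0 (by intro n hn; simp [hn])]
      simp [c0]
    have ht : Filter.Tendsto (fun y : ℝ => C * ∑' n, (y⁻¹) ^ n • c n) Filter.atTop (nhds C) := by
      have h1 := (hcd 0 (by simpa using hK)).continuousAt.tendsto
      rw [h0] at h1
      have h2 := (h1.comp tendsto_inv_atTop_zero).const_mul C
      rw [mul_one] at h2
      exact h2
    refine ht.congr' ?_
    filter_upwards [Filter.eventually_gt_atTop (2 * K)] with y h
    exact (hgC y h).symm
  · intro y h
    have hy0 : 0 < y := by linarith
    have hcs := one_add_aux c c0 y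
      (summable_aux c K hK 1 (by simpa using hc) _ (hy y h).2) hy0
    have hes := one_add_aux e e0 y
      (summable_aux e K hK 1 (by simpa using he) _ (hy y h).2) hy0
    refine ⟨hcs.1, hes.1, ?_, ?_⟩
    · rw [hG, ← hcs.2]; exact hgC y h
    · rw [hG', ← hes.2]; exact hC' y h
end
end
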